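/- Let n ≥ 1, κ ≥ 1 and α ∈ (0, n/κ). Let ξ(x), x ∈ ℝ^n, be a measurable, mean-square continuous random field on a probability space such that every finite-dimensional vector (ξ(x_1), …, ξ(x_m)) is centered Gaussian, E ξ(x)² = 1, and E[ξ(x)ξ(y)] = B(‖x − y‖) where B(r) = r^{−α} 𝓛_0(r) for r > 0 with 𝓛_0 slowly varying at infinity. Let Δ ⊂ ℝ^n be a compact set with |Δ| > 0 containing the origin in its interior, and for r > 0 let Δ(r) := {r x : x ∈ Δ}. Let S ∈ L²(ℝ, φ(ω)dω) have Hermite coefficients C_j := ∫_ℝ S(ω) H_j(ω) φ(ω) dω satisfying C_j = 0 for all 0 ≤ j ≤ κ − 1 and C_κ ≠ 0 (S has Hermite rank κ and zero mean). Define K_r := ∫_{Δ(r)} S(ξ(x)) dx and K_{r,κ} := (C_κ/κ!) ∫_{Δ(r)} H_κ(ξ(x)) dx, and assume Var(K_r) > 0 and Var(K_{r,κ}) > 0 for all sufficiently large r. Then for every probability measure μ on ℝ: K_r/√(Var K_r) converges in distribution to μ as r → ∞ if and only if K_{r,κ}/√(Var K_{r,κ}) converges in distribution to μ as r → ∞;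 in other words, if a limit distribution exists for one of the two normalized random variables then it exists for the other and the two limit distributions coincide. -/

import Mathlib

/-!
The difference of the two functionals is the functional of `T = S - (C_κ / κ!) H_κ`, which is
orthogonal to `H_0, …, H_κ`. It is shown to be negligible in `L²` against the `H_κ` functional;
after normalization both variables are then asymptotically equal in `L²`, hence in probability, and
Slutsky's theorem transfers the limit law (`tendsto_integral_sq_normalized`,
`forall_tendsto_of_tendstoInMeasure`).

Each pair `(ξ x, ξ y)` has the law of `(U, ρ U + √(1 - ρ²) V)` with `U, V` independent standard
Gaussian and `ρ = B ‖x - y‖ ∈ [0, 1]` (`map_pair_eq`). The second moment of the `H_κ` functional over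
`D` is `κ! ∫∫ B ^ κ`. No completeness of the Hermite polynomials is needed for `T`: the Mehler kernel
has squared `L²` norm `1 / (1 - ρ²) = ∑ ρ ^ (2 j)`, and Bessel's inequality against the first `k`
tensors `H_j ⊗ H_j` leaves the tail `ρ ^ (2 k) / (1 - ρ²)`, so that
`E T(ξ x) T(ξ y) ≤ 2 ^ (k + 1) ρ ^ k E T²` whenever `T ⟂ H_j` for `j < k` (`integral_pair_le`).
The second moment of the functional of `T` is thus at most a constant times `∫∫ B ^ (κ + 1)`.

It remains to see that `∫∫ B ^ (κ + 1)` is negligible against `∫∫ B ^ κ` over `rΔ × rΔ`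
(`integral_pairVol_succ_le`). Away from the diagonal this holds because `B → 0`. Pairs at bounded
distance have mass `O(r ^ n)`, whereas `∫∫ B ^ κ ≥ c r ^ n ∫_{ball(0, c r)} B ^ κ` and the last
integral diverges: `B(2r) / B(r) → 2 ^ (-α)` with `ακ < n`, so successive dyadic annuli carry
non-decreasing mass.
-/

open MeasureTheory Filter ProbabilityTheory Pointwise

/-- The `m`-th probabilists' Hermite polynomial as a function `ℝ → ℝ`. -/
noncomputable def hermiteFun (m : ℕ) (x : ℝ) : ℝ :=
  Polynomial.eval x ((Polynomial.hermite m).map (Int.castRingHom ℝ))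

/-- The standard normal density on `ℝ`. -/
noncomputable def stdNormalPDF (x : ℝ) : ℝ :=
  Real.exp (-x ^ 2 / 2) / Real.sqrt (2 * Real.pi)

/-! ### Hermite polynomials and the standard Gaussian measure -/

/-- The standard Gaussian probability measure on `ℝ`. -/
noncomputable abbrev stdG : Measure ℝ := gaussianReal 0 1

/-- The probabilists' Hermite polynomial with real coefficients. -/
noncomputable def hermiteR (m : ℕ) : Polynomial ℝ :=
  (Polynomial.hermite m).map (Int.castRingHom ℝ)

lemma hermiteFun_eq (m : ℕ) : hermiteFun m = fun x => (hermiteR m).eval x := rfl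

lemma hermiteR_zero : hermiteR 0 = 1 := by simp [hermiteR]

lemma hermiteR_one : hermiteR 1 = Polynomial.X := by simp [hermiteR]

lemma hermiteR_succ (m : ℕ) : hermiteR (m + 1) =
    Polynomial.X * hermiteR m - Polynomial.derivative (hermiteR m) := by
  simp [hermiteR, Polynomial.hermite_succ, Polynomial.derivative_map]

lemma derivative_hermiteR_succ (m : ℕ) :
    Polynomial.derivative (hermiteR (m + 1)) = Polynomial.C ((m : ℝ) + 1) * hermiteR m := by
  induction m with
  | zero => simp [hermiteR_one, hermiteR_zero]
  | succ m ih =>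
    have h := congrArg Polynomial.derivative (hermiteR_succ (m + 1))
    rw [h, ih]
    simp only [Polynomial.derivative_sub, Polynomial.derivative_mul, Polynomial.derivative_X,
      Polynomial.derivative_C]
    rw [ih]
    have h3 := hermiteR_succ m
    rw [h3]
    simp only [map_add, map_one, Nat.cast_add, Nat.cast_one]
    ring

lemma hermiteR_succ_succ (m : ℕ) : hermiteR (m + 2) =
    Polynomial.X * hermiteR (m + 1) - Polynomial.C ((m : ℝ) + 1) * hermiteR m := by
  rw [hermiteR_succ (m + 1), derivative_hermiteR_succ]

lemma integrable_poly_stdG (p : Polynomial ℝ) : Integrable (fun x => p.eval x) stdG := by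
  have h : ∀ k : ℕ, Integrable (fun x : ℝ => x ^ k) stdG := by
    intro k
    have h1 : MemLp (id : ℝ → ℝ) (k : ENNReal) stdG := memLp_id_gaussianReal' _ (by simp)
    have h2 := h1.integrable_norm_pow'
    refine h2.mono' (by fun_prop) (ae_of_all _ fun x => ?_)
    simp
  simp_rw [Polynomial.eval_eq_sum_range]
  exact integrable_finsetSum _ fun i _ => (h i).const_mul _

lemma memLp_poly_stdG (p : Polynomial ℝ) : MemLp (fun x => p.eval x) 2 stdG := by
  rw [memLp_two_iff_integrable_sq (by fun_prop)]
  exact (integrable_poly_stdG (p ^ 2)).congr (ae_of_all _ fun x => by simp)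

lemma hasDerivAt_gaussianPDFReal (x : ℝ) :
    HasDerivAt (gaussianPDFReal 0 1) (-x * gaussianPDFReal 0 1 x) x := by
  have : gaussianPDFReal 0 1 = fun x : ℝ => (√(2 * Real.pi))⁻¹ * Real.exp (-x ^ 2 / 2) := by
    ext y; simp [gaussianPDFReal]
  rw [this]
  have h1 : HasDerivAt (fun x : ℝ => -x ^ 2 / 2) (-x) x := by
    have := ((hasDerivAt_pow 2 x).neg).div_const 2
    convert! this using 1
    simp
    ring
  convert! (h1.exp).const_mul ((√(2 * Real.pi))⁻¹) using 1
  ring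

lemma integrable_stdG_iff {f : ℝ → ℝ} :
    Integrable f stdG ↔ Integrable (fun x => gaussianPDFReal 0 1 x * f x) := by
  rw [stdG, gaussianReal_of_var_ne_zero _ one_ne_zero,
    integrable_withDensity_iff_integrable_smul' (measurable_gaussianPDF _ _)
      (ae_of_all _ fun _ => gaussianPDF_lt_top)]
  simp [toReal_gaussianPDF]

lemma integral_stdG (f : ℝ → ℝ) :
    ∫ x, f x ∂stdG = ∫ x, gaussianPDFReal 0 1 x * f x := by
  rw [stdG, integral_gaussianReal_eq_integral_smul one_ne_zero]; rfl

/-- Gaussian integration by parts for polynomials. -/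
lemma integral_X_mul_poly_stdG (p : Polynomial ℝ) :
    ∫ x, x * p.eval x ∂stdG = ∫ x, (Polynomial.derivative p).eval x ∂stdG := by
  have i1 : Integrable (fun x => x * p.eval x) stdG := by
    exact (integrable_poly_stdG (Polynomial.X * p)).congr (ae_of_all _ fun x => by simp)
  have i2 := integrable_poly_stdG (Polynomial.derivative p)
  have i3 := integrable_poly_stdG p
  have key := integral_eq_zero_of_hasDerivAt_of_integrable
    (f := fun x => gaussianPDFReal 0 1 x * p.eval x)
    (f' := fun x => gaussianPDFReal 0 1 x *
      ((Polynomial.derivative p).eval x - x * p.eval x))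
    (fun x => by
      convert! (hasDerivAt_gaussianPDFReal x).mul (p.hasDerivAt x) using 1
      ring)
    (integrable_stdG_iff.1 (i2.sub i1)) (integrable_stdG_iff.1 i3)
  rw [← integral_stdG, integral_sub i2 i1] at key
  linarith

lemma integral_hermiteR_succ_mul (m : ℕ) (p : Polynomial ℝ) :
    ∫ x, (hermiteR (m + 1)).eval x * p.eval x ∂stdG =
      ∫ x, (hermiteR m).eval x * (Polynomial.derivative p).eval x ∂stdG := by
  have h := integral_X_mul_poly_stdG (hermiteR m * p)
  have i1 : Integrable (fun x => x * (hermiteR m * p).eval x) stdG := by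
    exact (integrable_poly_stdG (Polynomial.X * (hermiteR m * p))).congr
      (ae_of_all _ fun x => by simp)
  have i2 := integrable_poly_stdG (Polynomial.derivative (hermiteR m) * p)
  have i3 := integrable_poly_stdG (hermiteR m * Polynomial.derivative p)
  have e1 : ∀ x, (hermiteR (m + 1)).eval x * p.eval x =
      x * (hermiteR m * p).eval x - (Polynomial.derivative (hermiteR m) * p).eval x := by
    intro x; rw [hermiteR_succ]; simp; ring
  simp_rw [e1]
  rw [integral_sub i1 i2, h, Polynomial.derivative_mul]
  simp_rw [Polynomial.eval_add]
  rw [integral_add i2 i3]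
  simp

lemma integral_hermiteR_mul_hermiteR (j k : ℕ) :
    ∫ x, (hermiteR j).eval x * (hermiteR k).eval x ∂stdG =
      if j = k then (k.factorial : ℝ) else 0 := by
  induction j generalizing k with
  | zero =>
    cases k with
    | zero => simp [hermiteR_zero]
    | succ k =>
      have := integral_hermiteR_succ_mul k 1
      simp [hermiteR_zero] at this ⊢
      exact this
  | succ j ih =>
    rw [integral_hermiteR_succ_mul]
    cases k with
    | zero => simp [hermiteR_zero]
    | succ k =>
      rw [derivative_hermiteR_succ]
      have e : ∀ x, (hermiteR j).eval x * (Polynomial.C ((k : ℝ) + 1) * hermiteR k).eval x =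
        ((k : ℝ) + 1) * ((hermiteR j).eval x * (hermiteR k).eval x) := by
        intro x; simp; ring
      simp_rw [e]
      rw [integral_const_mul, ih]
      by_cases h : j = k
      · simp [h, Nat.factorial_succ]
      · simp [h]

/-- Hermite polynomials are eigenfunctions of the Ornstein–Uhlenbeck semigroup (Mehler's
formula for the conditional expectation of `H_m(ρ x + s Z)`). -/
lemma integral_hermiteR_mehler {ρ s : ℝ} (hs : ρ ^ 2 + s ^ 2 = 1) (x : ℝ) (m : ℕ) :
    ∫ z, (hermiteR m).eval (ρ * x + s * z) ∂stdG = ρ ^ m * (hermiteR m).eval x := by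
  have hcomp : ∀ (p : Polynomial ℝ) (z : ℝ), p.eval (ρ * x + s * z) =
      (p.comp (Polynomial.C (ρ * x) + Polynomial.C s * Polynomial.X)).eval z := by
    intro p z; simp
  have hint : ∀ p : Polynomial ℝ, Integrable (fun z => p.eval (ρ * x + s * z)) stdG := by
    intro p; simp_rw [hcomp]; exact integrable_poly_stdG _
  have hint2 : ∀ p : Polynomial ℝ, Integrable (fun z => z * p.eval (ρ * x + s * z)) stdG := by
    intro p
    exact (integrable_poly_stdG (Polynomial.X *
      (p.comp (Polynomial.C (ρ * x) + Polynomial.C s * Polynomial.X)))).congr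
        (ae_of_all _ fun x => by simp)
  have hibp : ∀ p : Polynomial ℝ, ∫ z, z * p.eval (ρ * x + s * z) ∂stdG =
      s * ∫ z, (Polynomial.derivative p).eval (ρ * x + s * z) ∂stdG := by
    intro p
    have := integral_X_mul_poly_stdG
      (p.comp (Polynomial.C (ρ * x) + Polynomial.C s * Polynomial.X))
    simp_rw [hcomp]
    rw [this, ← integral_const_mul]
    simp [Polynomial.derivative_comp]
  have main : ∀ m : ℕ,
      (∫ z, (hermiteR m).eval (ρ * x + s * z) ∂stdG = ρ ^ m * (hermiteR m).eval x) ∧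
      (∫ z, (hermiteR (m + 1)).eval (ρ * x + s * z) ∂stdG =
        ρ ^ (m + 1) * (hermiteR (m + 1)).eval x) := by
    intro m
    induction m with
    | zero =>
      refine ⟨by simp [hermiteR_zero], ?_⟩
      have i1 : Integrable (fun z : ℝ => s * z) stdG := by
        have := (hint2 1).const_mul s
        simpa using this
      simp only [zero_add, hermiteR_one, Polynomial.eval_X, pow_one]
      rw [integral_add (integrable_const _) i1, integral_const_mul s,
        integral_id_gaussianReal]
      simp
    | succ m ih =>
      refine ⟨ih.2, ?_⟩
      have e : ∀ z, (hermiteR (m + 1 + 1)).eval (ρ * x + s * z) =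
          ρ * x * (hermiteR (m + 1)).eval (ρ * x + s * z) +
          s * (z * (hermiteR (m + 1)).eval (ρ * x + s * z)) -
          ((m : ℝ) + 1) * (hermiteR m).eval (ρ * x + s * z) := by
        intro z; rw [hermiteR_succ_succ]; simp; ring
      simp_rw [e]
      rw [integral_sub (by exact ((hint _).const_mul _).add ((hint2 _).const_mul _))
        ((hint _).const_mul _), integral_add ((hint _).const_mul _) ((hint2 _).const_mul _)]
      simp only [integral_const_mul]
      rw [hibp, derivative_hermiteR_succ]
      simp only [Polynomial.eval_mul, Polynomial.eval_C, integral_const_mul]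
      rw [ih.1, ih.2, hermiteR_succ_succ]
      simp only [Polynomial.eval_mul, Polynomial.eval_C, Polynomial.eval_sub, Polynomial.eval_X]
      have : s ^ 2 = 1 - ρ ^ 2 := by linarith
      linear_combination (((m : ℝ) + 1) * ρ ^ m * (hermiteR m).eval x) * this
  exact (main m).1

/-! ### The bivariate standard Gaussian law with correlation `ρ` -/

/-- A linear combination of two independent standard Gaussian variables is Gaussian. -/
lemma map_lin_stdG_prod (a b : ℝ) :
    (stdG.prod stdG).map (fun p : ℝ × ℝ => a * p.1 + b * p.2) =
      gaussianReal 0 (Real.toNNReal (a ^ 2 + b ^ 2)) := by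
  have h1 : (stdG.prod stdG).map (fun p : ℝ × ℝ => a * p.1) =
      gaussianReal 0 (Real.toNNReal (a ^ 2)) := by
    have : (fun p : ℝ × ℝ => a * p.1) = (fun x => a * x) ∘ Prod.fst := rfl
    rw [this, ← Measure.map_map (by fun_prop) measurable_fst, Measure.map_fst_prod]
    simp [gaussianReal_map_const_mul, Real.toNNReal_of_nonneg (sq_nonneg a)]
  have h2 : (stdG.prod stdG).map (fun p : ℝ × ℝ => b * p.2) =
      gaussianReal 0 (Real.toNNReal (b ^ 2)) := by
    have : (fun p : ℝ × ℝ => b * p.2) = (fun x => b * x) ∘ Prod.snd := rfl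
    rw [this, ← Measure.map_map (by fun_prop) measurable_snd, Measure.map_snd_prod]
    simp [gaussianReal_map_const_mul, Real.toNNReal_of_nonneg (sq_nonneg b)]
  have hind : IndepFun (fun p : ℝ × ℝ => a * p.1) (fun p : ℝ × ℝ => b * p.2)
      (stdG.prod stdG) :=
    indepFun_prod (X := fun x => a * x) (Y := fun x => b * x) (by fun_prop) (by fun_prop)
  have h3 := gaussianReal_add_gaussianReal_of_indepFun hind h1 h2
  rw [Real.toNNReal_add (sq_nonneg a) (sq_nonneg b)]
  rw [add_zero] at h3
  exact h3

lemma map_snd_pair {ρ s : ℝ} (hs : ρ ^ 2 + s ^ 2 = 1) :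
    (stdG.prod stdG).map (fun p : ℝ × ℝ => ρ * p.1 + s * p.2) = stdG := by
  rw [map_lin_stdG_prod, hs]; simp

/-- Two measurable maps are jointly standard Gaussian with correlation `ρ` as soon as all their
linear combinations are Gaussian with the right variance (Cramér–Wold). -/
lemma map_pair_eq {Ω : Type*} [MeasurableSpace Ω] {μ : Measure Ω} [IsProbabilityMeasure μ]
    {X Y : Ω → ℝ} (hX : Measurable X) (hY : Measurable Y) {ρ s : ℝ} (hs : ρ ^ 2 + s ^ 2 = 1)
    (h : ∀ a b : ℝ, μ.map (fun ω => a * X ω + b * Y ω) =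
      gaussianReal 0 (Real.toNNReal (a ^ 2 + 2 * a * b * ρ + b ^ 2))) :
    μ.map (fun ω => (X ω, Y ω)) =
      (stdG.prod stdG).map (fun p : ℝ × ℝ => (p.1, ρ * p.1 + s * p.2)) := by
  have : IsProbabilityMeasure (μ.map (fun ω => (X ω, Y ω))) :=
    Measure.isProbabilityMeasure_map (by fun_prop)
  have : IsProbabilityMeasure
      ((stdG.prod stdG).map (fun p : ℝ × ℝ => (p.1, ρ * p.1 + s * p.2))) :=
    Measure.isProbabilityMeasure_map (by fun_prop)
  refine Measure.ext_of_charFunDual (funext fun L => ?_)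
  rw [charFunDual_eq_charFun_map_one, charFunDual_eq_charFun_map_one]
  have hL : ∀ p : ℝ × ℝ, L p = L (1, 0) * p.1 + L (0, 1) * p.2 := by
    intro p
    have : p = p.1 • ((1 : ℝ), (0 : ℝ)) + p.2 • ((0 : ℝ), (1 : ℝ)) := by
      ext <;> simp
    conv_lhs => rw [this]
    rw [map_add, map_smul, map_smul]
    simp [mul_comm]
  have hLf : (L : ℝ × ℝ → ℝ) = fun p => L (1, 0) * p.1 + L (0, 1) * p.2 := funext hL
  rw [hLf, Measure.map_map (by fun_prop) (by fun_prop),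
    Measure.map_map (by fun_prop) (by fun_prop)]
  congr 1
  have e1 := h (L (1, 0)) (L (0, 1))
  have e2 := map_lin_stdG_prod (L (1, 0) + L (0, 1) * ρ) (L (0, 1) * s)
  simp only [Function.comp_def]
  rw [e1]
  have e3 : (fun p : ℝ × ℝ => L (1, 0) * p.1 + L (0, 1) * (ρ * p.1 + s * p.2)) =
    fun p : ℝ × ℝ => (L (1, 0) + L (0, 1) * ρ) * p.1 + (L (0, 1) * s) * p.2 := by
    ext p; ring
  rw [e3, e2]
  congr 2
  linear_combination (-(L (0, 1)) ^ 2) * hs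

lemma memLp_fst_pair {T : ℝ → ℝ} (hT : MemLp T 2 stdG) :
    MemLp (fun p : ℝ × ℝ => T p.1) 2 (stdG.prod stdG) := hT.comp_fst _

lemma memLp_snd_pair {T : ℝ → ℝ} (hT : MemLp T 2 stdG) {ρ s : ℝ}
    (hs : ρ ^ 2 + s ^ 2 = 1) :
    MemLp (fun p : ℝ × ℝ => T (ρ * p.1 + s * p.2)) 2 (stdG.prod stdG) :=
  hT.comp_measurePreserving ⟨by fun_prop, map_snd_pair hs⟩

/-- Correlation of `f(X)` and `g(Y)` for a bivariate standard Gaussian pair `(X, Y)`, as an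
iterated integral. -/
lemma integral_pair_eq {f g : ℝ → ℝ} (hf : MemLp f 2 stdG) (hg : MemLp g 2 stdG) {ρ s : ℝ}
    (hs : ρ ^ 2 + s ^ 2 = 1) :
    ∫ p, f p.1 * g (ρ * p.1 + s * p.2) ∂(stdG.prod stdG) =
      ∫ x, f x * ∫ z, g (ρ * x + s * z) ∂stdG ∂stdG := by
  rw [integral_prod _ (by exact (memLp_fst_pair hf).integrable_mul (memLp_snd_pair hg hs))]
  simp_rw [integral_const_mul]

lemma integral_pair_hermiteR {ρ s : ℝ} (hs : ρ ^ 2 + s ^ 2 = 1) (m : ℕ) :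
    ∫ p, (hermiteR m).eval p.1 * (hermiteR m).eval (ρ * p.1 + s * p.2) ∂(stdG.prod stdG) =
      m.factorial * ρ ^ m := by
  rw [integral_pair_eq (memLp_poly_stdG _) (memLp_poly_stdG _) hs]
  simp_rw [integral_hermiteR_mehler hs]
  have : ∀ x : ℝ, (hermiteR m).eval x * (ρ ^ m * (hermiteR m).eval x) =
    ρ ^ m * ((hermiteR m).eval x * (hermiteR m).eval x) := fun x => by ring
  simp_rw [this, integral_const_mul, integral_hermiteR_mul_hermiteR]
  simp [mul_comm]

/-! ### The Mehler kernel -/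

/-- The Mehler kernel: the density, with respect to `stdG.prod stdG`, of the bivariate standard
Gaussian law with correlation `ρ`. -/
noncomputable def mehler (ρ : ℝ) (x y : ℝ) : ℝ :=
  gaussianPDFReal (ρ * x) (Real.toNNReal (1 - ρ ^ 2)) y / gaussianPDFReal 0 1 y

lemma measurable_mehler (ρ : ℝ) : Measurable (fun p : ℝ × ℝ => mehler ρ p.1 p.2) := by
  unfold mehler gaussianPDFReal
  fun_prop

lemma integral_mehler_mul {ρ s : ℝ} (hs : ρ ^ 2 + s ^ 2 = 1) (hρ : ρ ^ 2 < 1) {g : ℝ → ℝ}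
    (hg : Measurable g) (x : ℝ) :
    ∫ y, mehler ρ x y * g y ∂stdG = ∫ z, g (ρ * x + s * z) ∂stdG := by
  have h1 : stdG.map (fun z => ρ * x + s * z) =
      gaussianReal (ρ * x) (Real.toNNReal (1 - ρ ^ 2)) := by
    have : (fun z => ρ * x + s * z) = (fun y => ρ * x + y) ∘ (fun z => s * z) := rfl
    rw [this, ← Measure.map_map (by fun_prop) (by fun_prop), gaussianReal_map_const_mul,
      gaussianReal_map_const_add]
    congr 1
    · simp
    · ext
      simp only [mul_one, NNReal.coe_mk]
      rw [Real.coe_toNNReal _ (by linarith)]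
      linarith
  have hv : Real.toNNReal (1 - ρ ^ 2) ≠ 0 := by
    simp only [ne_eq, Real.toNNReal_eq_zero, not_le]; linarith
  rw [← integral_map (φ := fun z => ρ * x + s * z) (f := g) (by fun_prop)
    hg.aestronglyMeasurable, h1, integral_gaussianReal_eq_integral_smul hv, integral_stdG]
  refine integral_congr_ae (ae_of_all _ fun y => ?_)
  have := (gaussianPDFReal_pos 0 1 y one_ne_zero).ne'
  simp only [mehler, smul_eq_mul]
  field_simp

/-- The square of the Mehler kernel against the Gaussian densities is again a multiple of a
Gaussian density; the constant `1 / (1 - ρ²)` is the squared `L²` norm of the kernel. -/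
lemma mehler_sq_mul {ρ : ℝ} (hρ : ρ ^ 2 < 1) (x y : ℝ) :
    gaussianPDFReal 0 1 x * (gaussianPDFReal 0 1 y * mehler ρ x y ^ 2) =
      1 / (1 - ρ ^ 2) *
        (gaussianPDFReal 0 (Real.toNNReal ((1 + ρ ^ 2) / (1 - ρ ^ 2))) x *
          gaussianPDFReal (2 * ρ / (1 + ρ ^ 2) * x)
            (Real.toNNReal ((1 - ρ ^ 2) / (1 + ρ ^ 2))) y) := by
  have h1 : 0 < 1 - ρ ^ 2 := by linarith
  have h2 : 0 < 1 + ρ ^ 2 := by positivity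
  have hpi := Real.pi_pos
  have hy := (gaussianPDFReal_pos 0 1 y one_ne_zero).ne'
  have e1 : gaussianPDFReal 0 1 x * (gaussianPDFReal 0 1 y * mehler ρ x y ^ 2) =
      gaussianPDFReal (ρ * x) (Real.toNNReal (1 - ρ ^ 2)) y ^ 2 *
        (gaussianPDFReal 0 1 x / gaussianPDFReal 0 1 y) := by
    unfold mehler; field_simp
  rw [e1]
  simp only [gaussianPDFReal]
  rw [Real.coe_toNNReal _ h1.le, Real.coe_toNNReal _ (div_pos h2 h1).le,
    Real.coe_toNNReal _ (div_pos h1 h2).le]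
  set c0 := √(2 * Real.pi * ((1 : NNReal) : ℝ)) with hc0
  set c1 := √(2 * Real.pi * (1 - ρ ^ 2)) with hc1
  set c2 := √(2 * Real.pi * ((1 + ρ ^ 2) / (1 - ρ ^ 2))) with hc2
  set c3 := √(2 * Real.pi * ((1 - ρ ^ 2) / (1 + ρ ^ 2))) with hc3
  have c0p : c0 ≠ 0 := by rw [hc0]; simp; positivity
  have c1s : c1 ^ 2 = 2 * Real.pi * (1 - ρ ^ 2) := Real.sq_sqrt (by positivity)
  have c23 : c2 * c3 = 2 * Real.pi := by
    rw [hc2, hc3, ← Real.sqrt_mul (by positivity)]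
    rw [show 2 * Real.pi * ((1 + ρ ^ 2) / (1 - ρ ^ 2)) * (2 * Real.pi * ((1 - ρ ^ 2) / (1 + ρ ^ 2)))
      = (2 * Real.pi) ^ 2 by field_simp]
    exact Real.sqrt_sq (by positivity)
  have e2 : ∀ A B C D E : ℝ,
      (c1⁻¹ * Real.exp A) ^ 2 * (c0⁻¹ * Real.exp B / (c0⁻¹ * Real.exp C)) =
      (c1 ^ 2)⁻¹ * Real.exp (2 * A + B - C) := by
    intro A B C D E
    rw [show 2 * A + B - C = A + A + B - C by ring, Real.exp_sub, Real.exp_add, Real.exp_add]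
    field_simp
  rw [e2 _ _ _ 0 0, c1s]
  have e3 : ∀ D E : ℝ, 1 / (1 - ρ ^ 2) * (c2⁻¹ * Real.exp D * (c3⁻¹ * Real.exp E)) =
      1 / (1 - ρ ^ 2) * (c2 * c3)⁻¹ * Real.exp (D + E) := by
    intro D E; rw [Real.exp_add, mul_inv]; ring
  rw [e3, c23]
  have e4 : (2 * Real.pi * (1 - ρ ^ 2))⁻¹ = 1 / (1 - ρ ^ 2) * (2 * Real.pi)⁻¹ := by
    field_simp
  rw [e4]
  congr 2
  simp only [NNReal.coe_one]
  field_simp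
  ring

lemma integrable_mehler_sq {ρ : ℝ} (hρ : ρ ^ 2 < 1) :
    Integrable (fun p : ℝ × ℝ => mehler ρ p.1 p.2 ^ 2) (stdG.prod stdG) ∧
    ∫ p, mehler ρ p.1 p.2 ^ 2 ∂(stdG.prod stdG) = 1 / (1 - ρ ^ 2) := by
  have h1 : 0 < 1 - ρ ^ 2 := by linarith
  have h2 : 0 < 1 + ρ ^ 2 := by positivity
  set v := Real.toNNReal ((1 - ρ ^ 2) / (1 + ρ ^ 2)) with hv
  set w := Real.toNNReal ((1 + ρ ^ 2) / (1 - ρ ^ 2)) with hw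
  have hv0 : v ≠ 0 := by
    simp only [hv, ne_eq, Real.toNNReal_eq_zero, not_le]; positivity
  have hw0 : w ≠ 0 := by
    simp only [hw, ne_eq, Real.toNNReal_eq_zero, not_le]; positivity
  have key : ∀ x y, gaussianPDFReal 0 1 y * mehler ρ x y ^ 2 =
      (1 / (1 - ρ ^ 2) * (gaussianPDFReal 0 w x / gaussianPDFReal 0 1 x)) *
        gaussianPDFReal (2 * ρ / (1 + ρ ^ 2) * x) v y := by
    intro x y
    have hx := (gaussianPDFReal_pos 0 1 x one_ne_zero).ne'
    have := mehler_sq_mul hρ x y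
    rw [← hv, ← hw] at this
    rw [← mul_right_inj' hx, this]
    field_simp
  have hi : ∀ x, Integrable (fun y => mehler ρ x y ^ 2) stdG := by
    intro x
    rw [integrable_stdG_iff]
    simp_rw [key]
    exact (integrable_gaussianPDFReal _ _).const_mul _
  have hI : ∀ x, ∫ y, mehler ρ x y ^ 2 ∂stdG =
      1 / (1 - ρ ^ 2) * (gaussianPDFReal 0 w x / gaussianPDFReal 0 1 x) := by
    intro x
    rw [integral_stdG]
    simp_rw [key]
    rw [integral_const_mul, integral_gaussianPDFReal_eq_one _ hv0, mul_one]
  have hx2 : ∀ x, gaussianPDFReal 0 1 x *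
      (1 / (1 - ρ ^ 2) * (gaussianPDFReal 0 w x / gaussianPDFReal 0 1 x)) =
      1 / (1 - ρ ^ 2) * gaussianPDFReal 0 w x := by
    intro x
    have hx := (gaussianPDFReal_pos 0 1 x one_ne_zero).ne'
    field_simp
  have hint : Integrable (fun p : ℝ × ℝ => mehler ρ p.1 p.2 ^ 2) (stdG.prod stdG) := by
    rw [integrable_prod_iff ((measurable_mehler ρ).pow_const 2).aestronglyMeasurable]
    refine ⟨ae_of_all _ hi, ?_⟩
    simp only [norm_pow, Real.norm_eq_abs, sq_abs]
    simp_rw [hI]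
    rw [integrable_stdG_iff]
    simp_rw [hx2]
    exact (integrable_gaussianPDFReal _ _).const_mul _
  refine ⟨hint, ?_⟩
  rw [integral_prod _ hint]
  simp only
  simp_rw [hI]
  rw [integral_stdG]
  simp_rw [hx2]
  rw [integral_const_mul, integral_gaussianPDFReal_eq_one _ hw0, mul_one]

/-! ### Correlation of functions of high Hermite rank -/

/-- Bessel's inequality, in the form used for a vector `u` orthogonal to a finite orthonormal
family `e`: only the part of `M` orthogonal to `e` contributes to `⟪M, u⟫`. -/
lemma inner_sq_le_of_orthogonal {E : Type*} [NormedAddCommGroup E] [InnerProductSpace ℝ E]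
    (k : ℕ) (e : Fin k → E) (he : Orthonormal ℝ e) (M u : E)
    (hu : ∀ i, inner ℝ (e i) u = 0) :
    (inner ℝ M u) ^ 2 ≤ (‖M‖ ^ 2 - ∑ i, (inner ℝ (e i) M) ^ 2) * ‖u‖ ^ 2 := by
  set P : E := ∑ i, (inner ℝ (e i) M) • e i with hP
  have h1 : inner ℝ P u = 0 := by
    rw [hP, sum_inner]
    simp [inner_smul_left, hu]
  have h2 : inner ℝ M u = inner ℝ (M - P) u := by rw [inner_sub_left, h1, sub_zero]
  have h3 : inner ℝ M P = ∑ i, (inner ℝ (e i) M) ^ 2 := by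
    rw [hP, inner_sum]
    refine Finset.sum_congr rfl fun i _ => ?_
    rw [inner_smul_right, real_inner_comm, sq]
  have h4 : inner ℝ P P = ∑ i, (inner ℝ (e i) M) ^ 2 := by
    rw [hP, he.inner_sum]
    simp [sq]
  have h5 : ‖M - P‖ ^ 2 = ‖M‖ ^ 2 - ∑ i, (inner ℝ (e i) M) ^ 2 := by
    rw [norm_sub_sq_real, h3, ← real_inner_self_eq_norm_sq P, h4]
    ring
  rw [h2, ← h5, ← mul_pow]
  refine sq_le_sq' ?_ (real_inner_le_norm _ _)
  have := abs_real_inner_le_norm (M - P) u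
  linarith [neg_abs_le (inner ℝ (M - P) u)]

lemma inner_toLp_eq {α : Type*} [MeasurableSpace α] {ν : Measure α} {f g : α → ℝ}
    (hf : MemLp f 2 ν) (hg : MemLp g 2 ν) :
    inner ℝ (hf.toLp f) (hg.toLp g) = ∫ a, f a * g a ∂ν := by
  rw [L2.inner_def]
  refine integral_congr_ae ?_
  filter_upwards [hf.coeFn_toLp, hg.coeFn_toLp] with a h1 h2
  rw [h1, h2]
  simp [mul_comm]

lemma memLp_tensor {f g : ℝ → ℝ} (hfm : Measurable f) (hgm : Measurable g)
    (hf : MemLp f 2 stdG) (hg : MemLp g 2 stdG) :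
    MemLp (fun p : ℝ × ℝ => f p.1 * g p.2) 2 (stdG.prod stdG) := by
  rw [memLp_two_iff_integrable_sq (by fun_prop)]
  simp_rw [mul_pow]
  exact hf.integrable_sq.mul_prod hg.integrable_sq

lemma memLp_mehler {ρ : ℝ} (hρ : ρ ^ 2 < 1) :
    MemLp (fun p : ℝ × ℝ => mehler ρ p.1 p.2) 2 (stdG.prod stdG) := by
  rw [memLp_two_iff_integrable_sq (measurable_mehler ρ).aestronglyMeasurable]
  exact (integrable_mehler_sq hρ).1

lemma integral_mehler_tensor {f g : ℝ → ℝ} (hfm : Measurable f) (hgm : Measurable g)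
    (hf : MemLp f 2 stdG) (hg : MemLp g 2 stdG) {ρ s : ℝ}
    (hs : ρ ^ 2 + s ^ 2 = 1) (hρ : ρ ^ 2 < 1) :
    ∫ p, mehler ρ p.1 p.2 * (f p.1 * g p.2) ∂(stdG.prod stdG) =
      ∫ p, f p.1 * g (ρ * p.1 + s * p.2) ∂(stdG.prod stdG) := by
  rw [integral_pair_eq hf hg hs,
    integral_prod _ (by exact (memLp_mehler hρ).integrable_mul (memLp_tensor hfm hgm hf hg))]
  refine integral_congr_ae (ae_of_all _ fun x => ?_)
  simp only
  rw [← integral_mehler_mul hs hρ hgm, ← integral_const_mul]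
  refine integral_congr_ae (ae_of_all _ fun y => ?_)
  simp only
  ring

/-- If `T` is orthogonal to the first `k` Hermite polynomials, its correlation along a standard
Gaussian pair is at most `ρ ^ k / √(1 - ρ²)` times its squared norm: apply Bessel's inequality
to the Mehler kernel, the tensors `H_j ⊗ H_j / j!` for `j < k`, and `T ⊗ T`. -/
lemma sq_integral_pair_le {T : ℝ → ℝ} (hTm : Measurable T) (hT : MemLp T 2 stdG) {k : ℕ}
    (hk : ∀ j < k, ∫ x, (hermiteR j).eval x * T x ∂stdG = 0) {ρ s : ℝ}
    (hs : ρ ^ 2 + s ^ 2 = 1) (hρ : ρ ^ 2 < 1) :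
    (∫ p, T p.1 * T (ρ * p.1 + s * p.2) ∂(stdG.prod stdG)) ^ 2 ≤
      ρ ^ (2 * k) / (1 - ρ ^ 2) * (∫ x, T x ^ 2 ∂stdG) ^ 2 := by
  have hHm : ∀ j, Measurable (fun x => (hermiteR j).eval x) := fun j => by fun_prop
  have hM := memLp_mehler hρ
  have hu := memLp_tensor hTm hTm hT hT
  have hH : ∀ j, MemLp (fun p : ℝ × ℝ => (hermiteR j).eval p.1 * (hermiteR j).eval p.2) 2
      (stdG.prod stdG) := fun j =>
    memLp_tensor (hHm j) (hHm j) (memLp_poly_stdG _) (memLp_poly_stdG _)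
  have he : ∀ j : ℕ, MemLp (fun p : ℝ × ℝ => ((j.factorial : ℝ)⁻¹) *
      ((hermiteR j).eval p.1 * (hermiteR j).eval p.2)) 2 (stdG.prod stdG) :=
    fun j => (hH j).const_mul _
  have hfac : ∀ j : ℕ, (j.factorial : ℝ) ≠ 0 := fun j => by positivity
  have horth : Orthonormal ℝ (fun i : Fin k => (he i).toLp _) := by
    rw [orthonormal_iff_ite]
    intro i j
    rw [inner_toLp_eq]
    have e1 : ∀ p : ℝ × ℝ, (((i : ℕ).factorial : ℝ)⁻¹) *
        ((hermiteR i).eval p.1 * (hermiteR i).eval p.2) * ((((j : ℕ).factorial : ℝ)⁻¹) *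
        ((hermiteR j).eval p.1 * (hermiteR j).eval p.2)) =
        ((((i : ℕ).factorial : ℝ)⁻¹) * (((j : ℕ).factorial : ℝ)⁻¹)) *
        (((hermiteR i).eval p.1 * (hermiteR j).eval p.1) *
          ((hermiteR i).eval p.2 * (hermiteR j).eval p.2)) := fun p => by ring
    simp_rw [e1]
    rw [integral_const_mul, integral_prod_mul
      (fun x => (hermiteR i).eval x * (hermiteR j).eval x)
      (fun x => (hermiteR i).eval x * (hermiteR j).eval x), integral_hermiteR_mul_hermiteR]
    by_cases h : i = j
    · subst h
      have := hfac i
      simp only [if_true]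
      field_simp
    · have h' : (i : ℕ) ≠ j := fun h' => h (Fin.ext h')
      simp [h, h']
  have hortho : ∀ i : Fin k, inner ℝ ((he i).toLp _) (hu.toLp _) = 0 := by
    intro i
    rw [inner_toLp_eq]
    have e1 : ∀ p : ℝ × ℝ, (((i : ℕ).factorial : ℝ)⁻¹) *
        ((hermiteR i).eval p.1 * (hermiteR i).eval p.2) * (T p.1 * T p.2) =
        (((i : ℕ).factorial : ℝ)⁻¹) *
        (((hermiteR i).eval p.1 * T p.1) * ((hermiteR i).eval p.2 * T p.2)) := fun p => by ring
    simp_rw [e1]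
    rw [integral_const_mul, integral_prod_mul
      (fun x => (hermiteR i).eval x * T x) (fun x => (hermiteR i).eval x * T x), hk i i.2]
    simp
  have hb := inner_sq_le_of_orthogonal k _ horth (hM.toLp _) (hu.toLp _) hortho
  rw [inner_toLp_eq, integral_mehler_tensor hTm hTm hT hT hs hρ, ← real_inner_self_eq_norm_sq,
    ← real_inner_self_eq_norm_sq, inner_toLp_eq, inner_toLp_eq] at hb
  have hn1 : ∫ p, mehler ρ p.1 p.2 * mehler ρ p.1 p.2 ∂(stdG.prod stdG) = 1 / (1 - ρ ^ 2) := by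
    rw [← (integrable_mehler_sq hρ).2]; simp_rw [sq]
  have hn2 : ∫ p : ℝ × ℝ, T p.1 * T p.2 * (T p.1 * T p.2) ∂(stdG.prod stdG) =
      (∫ x, T x ^ 2 ∂stdG) ^ 2 := by
    rw [sq (∫ x, T x ^ 2 ∂stdG), ← integral_prod_mul]
    congr 1; ext p; ring
  have hn3 : ∀ i : Fin k, inner ℝ ((he i).toLp _) (hM.toLp _) = ρ ^ (i : ℕ) := by
    intro i
    rw [inner_toLp_eq]
    have e1 : ∀ p : ℝ × ℝ, (((i : ℕ).factorial : ℝ)⁻¹) *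
        ((hermiteR i).eval p.1 * (hermiteR i).eval p.2) * mehler ρ p.1 p.2 =
        (((i : ℕ).factorial : ℝ)⁻¹) * (mehler ρ p.1 p.2 *
          ((hermiteR i).eval p.1 * (hermiteR i).eval p.2)) := fun p => by ring
    simp_rw [e1]
    rw [integral_const_mul, integral_mehler_tensor (f := fun x => (hermiteR i).eval x)
      (g := fun x => (hermiteR i).eval x) (hHm i) (hHm i) (memLp_poly_stdG _)
      (memLp_poly_stdG _) hs hρ, integral_pair_hermiteR hs]
    have := hfac i
    field_simp
  rw [hn1, hn2] at hb
  simp_rw [hn3] at hb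
  have hgeom : (1 / (1 - ρ ^ 2) - ∑ i : Fin k, (ρ ^ (i : ℕ)) ^ 2) =
      ρ ^ (2 * k) / (1 - ρ ^ 2) := by
    have h1 : 1 - ρ ^ 2 ≠ 0 := by linarith
    have h2 : ∀ i : ℕ, (ρ ^ i) ^ 2 = (ρ ^ 2) ^ i := fun i => by rw [← pow_mul, ← pow_mul, mul_comm]
    simp_rw [h2]
    rw [Fin.sum_univ_eq_sum_range (fun i => (ρ ^ 2) ^ i) k, geom_sum_eq (by linarith),
      pow_mul]
    have h3 : ρ ^ 2 - 1 ≠ 0 := by linarith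
    rw [div_sub' h1, div_left_inj' h1]
    field_simp
    ring
  rwa [hgeom] at hb

/-- Correlation bound, uniform over all correlations `ρ ∈ [0, 1]`: for `ρ ≤ 1 / 2` by the Mehler
kernel, and for `ρ > 1 / 2` by Cauchy–Schwarz, since then `(2 ρ) ^ k ≥ 1`. -/
lemma integral_pair_le {T : ℝ → ℝ} (hTm : Measurable T) (hT : MemLp T 2 stdG) {k : ℕ}
    (hk : ∀ j < k, ∫ x, (hermiteR j).eval x * T x ∂stdG = 0) {ρ s : ℝ}
    (hs : ρ ^ 2 + s ^ 2 = 1) (hρ : 0 ≤ ρ) :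
    ∫ p, T p.1 * T (ρ * p.1 + s * p.2) ∂(stdG.prod stdG) ≤
      2 ^ (k + 1) * (∫ x, T x ^ 2 ∂stdG) * ρ ^ k := by
  have hA : 0 ≤ ∫ x, T x ^ 2 ∂stdG := integral_nonneg fun x => sq_nonneg _
  by_cases h : ρ ≤ 1 / 2
  · have h1 : ρ ^ 2 ≤ 1 / 4 := by nlinarith
    have hb := sq_integral_pair_le hTm hT hk hs (by linarith)
    have h2 : ρ ^ (2 * k) / (1 - ρ ^ 2) ≤ 4 * ρ ^ (2 * k) := by
      rw [div_le_iff₀ (by linarith)]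
      have : 0 ≤ ρ ^ (2 * k) := by positivity
      nlinarith
    have h3 : (∫ p, T p.1 * T (ρ * p.1 + s * p.2) ∂(stdG.prod stdG)) ^ 2 ≤
        (2 * (∫ x, T x ^ 2 ∂stdG) * ρ ^ k) ^ 2 := by
      refine hb.trans ((mul_le_mul_of_nonneg_right h2 (sq_nonneg _)).trans (le_of_eq ?_))
      ring
    have h4 := abs_le_of_sq_le_sq h3 (by positivity)
    refine (le_abs_self _).trans (h4.trans ?_)
    have : (2 : ℝ) ≤ 2 ^ (k + 1) := by
      rw [pow_succ]; linarith [one_le_pow₀ (one_le_two : (1 : ℝ) ≤ 2) (n := k)]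
    gcongr
  · have hf := memLp_fst_pair hT
    have hg := memLp_snd_pair hT hs
    have h1 : ∫ p, T p.1 * T (ρ * p.1 + s * p.2) ∂(stdG.prod stdG) ≤
        ∫ p, (T p.1 ^ 2 + T (ρ * p.1 + s * p.2) ^ 2) / 2 ∂(stdG.prod stdG) := by
      refine integral_mono (by exact hf.integrable_mul hg)
        ((hf.integrable_sq.add hg.integrable_sq).div_const 2) fun p => ?_
      have := sq_nonneg (T p.1 - T (ρ * p.1 + s * p.2))
      simp only
      linarith
    have e1 : ∫ p : ℝ × ℝ, T p.1 ^ 2 ∂(stdG.prod stdG) = ∫ x, T x ^ 2 ∂stdG := by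
      rw [integral_fun_fst (fun x => T x ^ 2)]; simp
    have e2 : ∫ p : ℝ × ℝ, T (ρ * p.1 + s * p.2) ^ 2 ∂(stdG.prod stdG) =
        ∫ x, T x ^ 2 ∂stdG := by
      rw [← integral_map (φ := fun p : ℝ × ℝ => ρ * p.1 + s * p.2) (f := fun x => T x ^ 2)
        (by fun_prop) (by fun_prop), map_snd_pair hs]
    rw [integral_div, integral_add hf.integrable_sq hg.integrable_sq, e1, e2] at h1
    have h2 : (1 : ℝ) ≤ (2 * ρ) ^ k := one_le_pow₀ (by linarith)
    rw [mul_pow] at h2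
    have h3 : 2 ^ (k + 1) * (∫ x, T x ^ 2 ∂stdG) * ρ ^ k =
      2 * (2 ^ k * ρ ^ k) * ∫ x, T x ^ 2 ∂stdG := by ring
    rw [h3]
    nlinarith

/-! ### Double integrals of powers of the covariance function -/

/-- A bounded positive function whose dyadic ratios tend to a limit `q < 1` vanishes at infinity,
geometrically along dyadic scales. -/
lemma tendsto_zero_of_ratio {b : ℝ → ℝ} {q : ℝ} (hq1 : q < 1)
    (hpos : ∀ r > 0, 0 < b r) (hle : ∀ r > 0, b r ≤ 1)
    (hratio : Tendsto (fun r => b (2 * r) / b r) atTop (nhds q)) :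
    Tendsto b atTop (nhds 0) := by
  obtain ⟨q', hqq', hq'1⟩ := exists_between (max_lt hq1 one_pos)
  have hq'0 : 0 < q' := lt_of_le_of_lt (le_max_right _ _) hqq'
  have hqq : q < q' := lt_of_le_of_lt (le_max_left _ _) hqq'
  obtain ⟨s, hs⟩ := eventually_atTop.1
    ((hratio.eventually_lt_const hqq).and (eventually_gt_atTop 0))
  have hs0 : 0 < max s 1 := by positivity
  have hstep : ∀ k : ℕ, ∀ r ≥ 2 ^ k * max s 1, b r ≤ q' ^ k := by
    intro k
    induction k with
    | zero => intro r hr; simp at hr; simpa using hle r (by linarith [hr.2])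
    | succ k ih =>
      intro r hr
      have h2 : 2 ^ k * max s 1 ≤ r / 2 := by rw [pow_succ] at hr; linarith
      have h3 : max s 1 ≤ r / 2 := by
        refine le_trans ?_ h2
        exact le_mul_of_one_le_left hs0.le (one_le_pow₀ one_le_two)
      obtain ⟨h4, h5⟩ := hs (r / 2) ((le_max_left _ _).trans h3)
      rw [div_lt_iff₀ (hpos _ h5), mul_div_cancel₀ _ two_ne_zero] at h4
      have := ih (r / 2) h2
      rw [pow_succ]
      nlinarith
  refine tendsto_order.2 ⟨fun a ha => ?_, fun a ha => ?_⟩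
  · filter_upwards [eventually_gt_atTop 0] with r hr using ha.trans (hpos r hr)
  · obtain ⟨k, hk⟩ := exists_pow_lt_of_lt_one ha hq'1
    filter_upwards [eventually_ge_atTop (2 ^ k * max s 1)] with r hr
    exact (hstep k r hr).trans_lt hk

section Kernel

variable {n : ℕ}

/-- The half-open annulus `s ≤ ‖z‖ < t`. -/
def annulus (n : ℕ) (s t : ℝ) : Set (EuclideanSpace ℝ (Fin n)) := {z | s ≤ ‖z‖ ∧ ‖z‖ < t}

lemma measurableSet_annulus (s t : ℝ) : MeasurableSet (annulus n s t) :=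
  (measurableSet_le measurable_const measurable_norm).inter
    (measurableSet_lt measurable_norm measurable_const)

lemma annulus_subset_ball (s t : ℝ) : annulus n s t ⊆ Metric.ball 0 t := by
  intro z hz; simpa using hz.2

lemma two_smul_annulus (s t : ℝ) : (2 : ℝ) • annulus n s t = annulus n (2 * s) (2 * t) := by
  ext z
  rw [Set.mem_smul_set_iff_inv_smul_mem₀ two_ne_zero]
  simp only [annulus, Set.mem_ofPred_eq, norm_smul, norm_inv, Real.norm_ofNat]
  constructor <;> rintro ⟨h1, h2⟩ <;> constructor <;> linarith

lemma integrableOn_of_bounded_ball {g : EuclideanSpace ℝ (Fin n) → ℝ} (hg : Measurable g)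
    (h0 : ∀ z, 0 ≤ g z) (h1 : ∀ z, g z ≤ 1) (t : ℝ) :
    IntegrableOn g (Metric.ball 0 t) := by
  refine Measure.integrableOn_of_bounded (M := 1) measure_ball_lt_top.ne
    hg.aestronglyMeasurable (ae_of_all _ fun z => ?_)
  rw [Real.norm_eq_abs, abs_of_nonneg (h0 z)]
  exact h1 z

/-- If `g(2z) ≥ 2⁻ⁿ g(z)` far from the origin, then `g` is not integrable: each dyadic annulus
carries at least as much mass as the previous one. -/
lemma tendsto_ball_integral_atTop (hn : 1 ≤ n) {g : EuclideanSpace ℝ (Fin n) → ℝ}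
    (hg : Measurable g) (h0 : ∀ z, 0 ≤ g z) (h1 : ∀ z, g z ≤ 1) (hpos : ∀ z ≠ 0, 0 < g z)
    {s : ℝ} (hs : 0 < s) (hdouble : ∀ z, s ≤ ‖z‖ → g z ≤ 2 ^ n * g ((2 : ℝ) • z)) :
    Tendsto (fun R : ℝ => ∫ z in Metric.ball 0 R, g z) atTop atTop := by
  have hint : ∀ s t, IntegrableOn g (annulus n s t) := fun s t =>
    (integrableOn_of_bounded_ball hg h0 h1 t).mono_set (annulus_subset_ball s t)
  set a := ∫ z in annulus n s (2 * s), g z with ha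
  have hapos : 0 < a := by
    rw [ha, setIntegral_pos_iff_support_of_nonneg_ae (ae_of_all _ h0) (hint _ _)]
    have : Nonempty (Fin n) := ⟨⟨0, hn⟩⟩
    obtain ⟨v, hv⟩ := exists_norm_eq (EuclideanSpace ℝ (Fin n)) (c := 3 / 2 * s) (by positivity)
    have hop : IsOpen {z : EuclideanSpace ℝ (Fin n) | s < ‖z‖ ∧ ‖z‖ < 2 * s} :=
      (isOpen_lt continuous_const continuous_norm).inter
        (isOpen_lt continuous_norm continuous_const)
    refine lt_of_lt_of_le (hop.measure_pos volume ⟨v, ?_⟩) (measure_mono ?_)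
    · constructor <;> rw [hv] <;> linarith
    · rintro z ⟨hz1, hz2⟩
      refine ⟨?_, hz1.le, hz2⟩
      rw [Function.mem_support]
      refine (hpos z ?_).ne'
      rintro rfl
      simp at hz1
      linarith
  have hstep : ∀ t, s ≤ t →
      a + ∫ z in annulus n s t, g z ≤ ∫ z in annulus n s (2 * t), g z := by
    intro t ht
    have hun : annulus n s (2 * t) = annulus n s (2 * s) ∪ annulus n (2 * s) (2 * t) := by
      ext z
      simp only [annulus, Set.mem_union, Set.mem_ofPred_eq]
      constructor
      · rintro ⟨h1, h2⟩
        rcases lt_or_ge ‖z‖ (2 * s) with h | h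
        · exact Or.inl ⟨h1, h⟩
        · exact Or.inr ⟨h, h2⟩
      · rintro (⟨h1, h2⟩ | ⟨h1, h2⟩) <;> constructor <;> linarith
    have hdis : Disjoint (annulus n s (2 * s)) (annulus n (2 * s) (2 * t)) := by
      rw [Set.disjoint_left]
      rintro z ⟨_, h1⟩ ⟨h2, _⟩
      linarith
    rw [hun, setIntegral_union hdis (measurableSet_annulus _ _) (hint _ _) (hint _ _)]
    refine add_le_add le_rfl ?_
    have hsc := Measure.setIntegral_comp_smul_of_pos (volume : Measure (EuclideanSpace ℝ (Fin n)))
      g (annulus n s t) (two_pos : (0 : ℝ) < 2)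
    rw [two_smul_annulus, finrank_euclideanSpace, Fintype.card_fin, smul_eq_mul] at hsc
    have h2n : (2 : ℝ) ^ n ≠ 0 := by positivity
    have hsc' : ∫ z in annulus n (2 * s) (2 * t), g z =
        2 ^ n * ∫ z in annulus n s t, g ((2 : ℝ) • z) := by rw [hsc]; field_simp
    rw [hsc', ← integral_const_mul]
    refine setIntegral_mono_on (hint _ _) ?_ (measurableSet_annulus _ _)
      fun z hz => hdouble z hz.1
    refine Integrable.const_mul ?_ _
    refine (integrableOn_of_bounded_ball (g := fun z => g ((2 : ℝ) • z)) (by fun_prop)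
      (fun z => h0 _) (fun z => h1 _) t).mono_set (annulus_subset_ball s t)
  have hind : ∀ m : ℕ, m * a ≤ ∫ z in annulus n s (2 ^ m * s), g z := by
    intro m
    induction m with
    | zero => simpa using integral_nonneg fun z => h0 z
    | succ m ih =>
      have := hstep (2 ^ m * s) (le_mul_of_one_le_left hs.le (one_le_pow₀ one_le_two))
      rw [pow_succ, show (2 : ℝ) ^ m * 2 * s = 2 * (2 ^ m * s) by ring]
      push_cast
      linarith
  refine tendsto_atTop.2 fun C => ?_
  obtain ⟨m, hm⟩ := exists_nat_gt (C / a)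
  rw [div_lt_iff₀ hapos] at hm
  filter_upwards [eventually_ge_atTop (2 ^ m * s)] with R hR
  refine hm.le.trans ((hind m).trans ?_)
  refine setIntegral_mono_set (integrableOn_of_bounded_ball hg h0 h1 R)
    (ae_of_all _ h0) (LE.le.eventuallyLE ?_)
  exact (annulus_subset_ball _ _).trans (Metric.ball_subset_ball hR)

/-- Integration over pairs of points of `D`. -/
noncomputable abbrev pairVol (D : Set (EuclideanSpace ℝ (Fin n))) :
    Measure (EuclideanSpace ℝ (Fin n) × EuclideanSpace ℝ (Fin n)) :=
  (volume.restrict D).prod (volume.restrict D)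

lemma integrable_pairVol {g : EuclideanSpace ℝ (Fin n) → ℝ}
    (hg : Measurable g) (h0 : ∀ z, 0 ≤ g z) (h1 : ∀ z, g z ≤ 1)
    {D : Set (EuclideanSpace ℝ (Fin n))} (hD : volume D ≠ ⊤) :
    Integrable (fun p => g (p.1 - p.2)) (pairVol D) := by
  have : IsFiniteMeasure (volume.restrict D) := isFiniteMeasure_restrict.2 hD
  refine Integrable.of_bound (hg.comp (by fun_prop)).aestronglyMeasurable 1 (ae_of_all _ fun p => ?_)
  rw [Real.norm_eq_abs, abs_of_nonneg (h0 _)]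
  exact h1 _

lemma integral_ball_sub (g : EuclideanSpace ℝ (Fin n) → ℝ) (x : EuclideanSpace ℝ (Fin n))
    (R : ℝ) : ∫ y in Metric.ball x R, g (x - y) = ∫ z in Metric.ball 0 R, g z := by
  rw [← integral_indicator measurableSet_ball, ← integral_indicator measurableSet_ball,
    ← integral_sub_left_eq_self _ volume x]
  congr 1
  ext y
  simp only [Set.indicator, Metric.mem_ball, dist_zero_right]
  rw [dist_comm, dist_eq_norm, sub_sub_cancel]

/-- Near-diagonal pairs in `D` have mass at most `|D| · |ball(0, M)|`. -/
lemma integral_near_le {D : Set (EuclideanSpace ℝ (Fin n))} (hD : volume D ≠ ⊤) (M : ℝ) :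
    ∫ p, (Metric.ball (0 : EuclideanSpace ℝ (Fin n)) M).indicator 1 (p.1 - p.2) ∂(pairVol D) ≤
      volume.real D * volume.real (Metric.ball (0 : EuclideanSpace ℝ (Fin n)) M) := by
  have : IsFiniteMeasure (volume.restrict D) := isFiniteMeasure_restrict.2 hD
  set g : EuclideanSpace ℝ (Fin n) → ℝ :=
    (Metric.ball (0 : EuclideanSpace ℝ (Fin n)) M).indicator 1 with hgdef
  have hgm : Measurable g := measurable_one.indicator measurableSet_ball
  have h0 : ∀ z, 0 ≤ g z := fun z => Set.indicator_nonneg (fun _ _ => zero_le_one) z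
  have h1 : ∀ z, g z ≤ 1 := fun z => Set.indicator_le_self' (fun _ _ => zero_le_one) z
  have hgi : Integrable g := by
    rw [hgdef, integrable_indicator_iff measurableSet_ball]
    exact integrableOn_const measure_ball_lt_top.ne
  have hgI : ∫ z, g z = volume.real (Metric.ball (0 : EuclideanSpace ℝ (Fin n)) M) := by
    rw [hgdef, integral_indicator_one measurableSet_ball]
  rw [integral_prod _ (integrable_pairVol hgm h0 h1 hD)]
  calc ∫ x in D, ∫ y in D, g (x - y) ≤
      ∫ x in D, volume.real (Metric.ball (0 : EuclideanSpace ℝ (Fin n)) M) := by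
        refine integral_mono (integrable_pairVol hgm h0 h1 hD).integral_prod_left
          (integrable_const _) fun x => ?_
        simp only
        rw [← hgI, ← integral_sub_left_eq_self g volume x]
        exact setIntegral_le_integral (hgi.comp_sub_left x) (ae_of_all _ fun y => h0 _)
    _ = _ := by simp

/-- Restrict the first point to the ball of radius `R`; the second then covers a full ball of
radius `R` around it. -/
lemma le_integral_pairVol {g : EuclideanSpace ℝ (Fin n) → ℝ}
    (hg : Measurable g) (h0 : ∀ z, 0 ≤ g z) (h1 : ∀ z, g z ≤ 1)
    {D : Set (EuclideanSpace ℝ (Fin n))} (hD : volume D ≠ ⊤) {R : ℝ}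
    (hball : Metric.ball 0 (2 * R) ⊆ D) :
    volume.real (Metric.ball (0 : EuclideanSpace ℝ (Fin n)) R) * ∫ z in Metric.ball 0 R, g z ≤
      ∫ p, g (p.1 - p.2) ∂(pairVol D) := by
  have : IsFiniteMeasure (volume.restrict D) := isFiniteMeasure_restrict.2 hD
  rcases lt_or_ge 0 R with hR | hR
  swap
  · rw [Metric.ball_eq_empty.2 hR]
    simpa using integral_nonneg fun p => h0 _
  have hi := integrable_pairVol hg h0 h1 hD
  rw [integral_prod _ hi]
  have hsub : Metric.ball (0 : EuclideanSpace ℝ (Fin n)) R ⊆ D :=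
    (Metric.ball_subset_ball (by linarith)).trans hball
  calc volume.real (Metric.ball (0 : EuclideanSpace ℝ (Fin n)) R) * ∫ z in Metric.ball 0 R, g z
      = ∫ x in Metric.ball (0 : EuclideanSpace ℝ (Fin n)) R, ∫ z in Metric.ball 0 R, g z := by
        simp
    _ ≤ ∫ x in Metric.ball (0 : EuclideanSpace ℝ (Fin n)) R, ∫ y in D, g (x - y) := by
        refine setIntegral_mono_on (integrableOn_const measure_ball_lt_top.ne)
          (hi.integral_prod_left.mono_measure (Measure.restrict_mono hsub le_rfl))
          measurableSet_ball fun x hx => ?_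
        rw [← integral_ball_sub g x R]
        refine setIntegral_mono_set ?_ (ae_of_all _ fun y => h0 _)
          (LE.le.eventuallyLE ?_)
        · refine Measure.integrableOn_of_bounded (M := 1) hD (hg.comp (by fun_prop)).aestronglyMeasurable
            (ae_of_all _ fun y => ?_)
          rw [Real.norm_eq_abs, abs_of_nonneg (h0 _)]
          exact h1 _
        · refine Set.Subset.trans (fun y hy => ?_) hball
          rw [Metric.mem_ball] at hx hy ⊢
          linarith [dist_triangle y x 0]
    _ ≤ ∫ x in D, ∫ y in D, g (x - y) :=
        setIntegral_mono_set hi.integral_prod_left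
          (ae_of_all _ fun x => integral_nonneg fun y => h0 _)
          (LE.le.eventuallyLE hsub)

/-- The double integral of `b ^ (k + 1)` over the dilated window is negligible with respect to
that of `b ^ k`. -/
lemma integral_pairVol_succ_le (hn : 1 ≤ n) {b : ℝ → ℝ} {q : ℝ} {k : ℕ} (hq1 : q < 1)
    (hqk : 1 < 2 ^ n * q ^ k) (hb0 : b 0 = 1)
    (hpos : ∀ r > 0, 0 < b r) (hle : ∀ r > 0, b r ≤ 1)
    (hbm : Measurable fun z : EuclideanSpace ℝ (Fin n) => b ‖z‖)
    (hratio : Tendsto (fun r => b (2 * r) / b r) atTop (nhds q))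
    {Δ : Set (EuclideanSpace ℝ (Fin n))} (hΔ : IsCompact Δ)
    (hΔ0 : (0 : EuclideanSpace ℝ (Fin n)) ∈ interior Δ) {ε : ℝ} (hε : 0 < ε) :
    ∀ᶠ r : ℝ in atTop,
      ∫ p, b ‖p.1 - p.2‖ ^ (k + 1) ∂(pairVol (r • Δ)) ≤
        ε * ∫ p, b ‖p.1 - p.2‖ ^ k ∂(pairVol (r • Δ)) := by
  have hb0' : ∀ z : EuclideanSpace ℝ (Fin n), 0 ≤ b ‖z‖ := by
    intro z
    rcases eq_or_ne z 0 with rfl | hz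
    · simp [hb0]
    · exact (hpos _ (norm_pos_iff.2 hz)).le
  have hb1 : ∀ z : EuclideanSpace ℝ (Fin n), b ‖z‖ ≤ 1 := by
    intro z
    rcases eq_or_ne z 0 with rfl | hz
    · simp [hb0]
    · exact hle _ (norm_pos_iff.2 hz)
  have hgm : ∀ j : ℕ, Measurable fun z : EuclideanSpace ℝ (Fin n) => b ‖z‖ ^ j :=
    fun j => hbm.pow_const j
  have hg0 : ∀ (j : ℕ) (z : EuclideanSpace ℝ (Fin n)), 0 ≤ b ‖z‖ ^ j :=
    fun j z => pow_nonneg (hb0' z) j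
  have hg1 : ∀ (j : ℕ) (z : EuclideanSpace ℝ (Fin n)), b ‖z‖ ^ j ≤ 1 :=
    fun j z => pow_le_one₀ (hb0' z) (hb1 z)
  obtain ⟨M, hM⟩ := eventually_atTop.1
    ((tendsto_zero_of_ratio hq1 hpos hle hratio).eventually_lt_const (half_pos hε))
  -- divergence of the integral of `b ^ k` over growing balls
  have hdiv : Tendsto (fun R : ℝ => ∫ z in Metric.ball (0 : EuclideanSpace ℝ (Fin n)) R,
      b ‖z‖ ^ k) atTop atTop := by
    have h1 : Tendsto (fun r => 2 ^ n * (b (2 * r) / b r) ^ k) atTop (nhds (2 ^ n * q ^ k)) :=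
      (hratio.pow k).const_mul _
    obtain ⟨s, hs⟩ := eventually_atTop.1 (h1.eventually_const_lt hqk)
    refine tendsto_ball_integral_atTop hn (hgm k) (hg0 k) (hg1 k)
      (fun z hz => pow_pos (hpos _ (norm_pos_iff.2 hz)) k) (s := max s 1) (by positivity) ?_
    intro z hz
    have hz1 : 0 < ‖z‖ := lt_of_lt_of_le one_pos ((le_max_right _ _).trans hz)
    have h2 := hs ‖z‖ ((le_max_left _ _).trans hz)
    have h3 := pow_pos (hpos _ hz1) k
    rw [div_pow, ← mul_div_assoc, lt_div_iff₀ h3, one_mul] at h2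
    rw [norm_smul, Real.norm_ofNat]
    exact h2.le
  obtain ⟨δ, hδ, hball⟩ := Metric.mem_nhds_iff.1 (mem_interior_iff_mem_nhds.1 hΔ0)
  set W := volume.real (Metric.ball (0 : EuclideanSpace ℝ (Fin n)) (δ / 2)) with hW
  have hWpos : 0 < W := by
    rw [hW, measureReal_def]
    exact ENNReal.toReal_pos (Metric.measure_ball_pos volume _ (by positivity)).ne'
      measure_ball_lt_top.ne
  set C := volume.real Δ * volume.real (Metric.ball (0 : EuclideanSpace ℝ (Fin n)) M) with hC
  have hR : Tendsto (fun r : ℝ => r * (δ / 2)) atTop atTop :=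
    tendsto_id.atTop_mul_const (by positivity)
  filter_upwards [(hdiv.comp hR).eventually_ge_atTop (2 * C / (ε * W)), eventually_gt_atTop 0]
    with r hr hr0
  simp only [Function.comp] at hr
  have hDfin : volume (r • Δ) ≠ ⊤ := (hΔ.smul r).measure_lt_top.ne
  have hDvol : volume.real (r • Δ) = r ^ n * volume.real Δ := by
    rw [measureReal_def, Measure.addHaar_smul, finrank_euclideanSpace, Fintype.card_fin,
      ENNReal.toReal_mul, ENNReal.toReal_ofReal (abs_nonneg _), abs_of_pos (by positivity),
      measureReal_def]
  have hBvol : volume.real (Metric.ball (0 : EuclideanSpace ℝ (Fin n)) (r * (δ / 2))) =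
      r ^ n * W := by
    rw [measureReal_def, Measure.addHaar_ball_mul_of_pos _ _ hr0, finrank_euclideanSpace,
      Fintype.card_fin, ENNReal.toReal_mul, ENNReal.toReal_ofReal (by positivity), hW,
      measureReal_def]
  have hsub : Metric.ball (0 : EuclideanSpace ℝ (Fin n)) (2 * (r * (δ / 2))) ⊆ r • Δ := by
    intro z hz
    rw [Set.mem_smul_set_iff_inv_smul_mem₀ hr0.ne']
    apply hball
    rw [mem_ball_zero_iff] at hz ⊢
    rw [norm_smul, norm_inv, Real.norm_eq_abs, abs_of_pos hr0, inv_mul_lt_iff₀ hr0]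
    linarith
  have hlow := le_integral_pairVol (hgm k) (hg0 k) (hg1 k) hDfin hsub
  have hnear := integral_near_le hDfin M
  rw [hBvol] at hlow
  rw [hDvol] at hnear
  have hik := integrable_pairVol (hgm k) (hg0 k) (hg1 k) hDfin
  have hik1 := integrable_pairVol (hgm (k + 1)) (hg0 (k + 1)) (hg1 (k + 1)) hDfin
  have hin := integrable_pairVol (g := (Metric.ball (0 : EuclideanSpace ℝ (Fin n)) M).indicator 1)
    (measurable_one.indicator measurableSet_ball)
    (fun z => Set.indicator_nonneg (fun _ _ => zero_le_one) z)
    (fun z => Set.indicator_le_self' (fun _ _ => zero_le_one) z) hDfin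
  have hup : ∫ p, b ‖p.1 - p.2‖ ^ (k + 1) ∂(pairVol (r • Δ)) ≤
      ε / 2 * (∫ p, b ‖p.1 - p.2‖ ^ k ∂(pairVol (r • Δ))) +
      ∫ p, (Metric.ball (0 : EuclideanSpace ℝ (Fin n)) M).indicator 1 (p.1 - p.2)
        ∂(pairVol (r • Δ)) := by
    rw [← integral_const_mul, ← integral_add (hik.const_mul _) hin]
    refine integral_mono hik1 ((hik.const_mul _).add hin) fun p => ?_
    simp only
    by_cases hp : ‖p.1 - p.2‖ < M
    · rw [Set.indicator_of_mem (by simpa using hp)]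
      have := hg1 (k + 1) (p.1 - p.2)
      have := hg0 k (p.1 - p.2)
      simp only [Pi.one_apply]
      have : 0 ≤ ε / 2 * b ‖p.1 - p.2‖ ^ k := by positivity
      linarith
    · rw [Set.indicator_of_notMem (by simpa using hp), add_zero, pow_succ, mul_comm]
      exact mul_le_mul_of_nonneg_right (hM _ (not_lt.1 hp)).le (hg0 k _)
  have hCle : r ^ n * C ≤ ε / 2 * (r ^ n * W *
      ∫ z in Metric.ball (0 : EuclideanSpace ℝ (Fin n)) (r * (δ / 2)), b ‖z‖ ^ k) := by
    rw [div_le_iff₀ (by positivity)] at hr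
    have : 0 < r ^ n := by positivity
    nlinarith
  have h9 := mul_le_mul_of_nonneg_left hlow (half_pos hε).le
  have h10 : r ^ n * volume.real Δ *
      volume.real (Metric.ball (0 : EuclideanSpace ℝ (Fin n)) M) = r ^ n * C := by
    rw [hC]; ring
  linarith

end Kernel

/-! ### Integral functionals of the field -/

lemma sq_functional {n : ℕ} {Ω : Type*} (ξ : EuclideanSpace ℝ (Fin n) → Ω → ℝ) (T : ℝ → ℝ)
    (D : Set (EuclideanSpace ℝ (Fin n))) (ω : Ω) :
    (∫ x in D, T (ξ x ω)) ^ 2 = ∫ p, T (ξ p.1 ω) * T (ξ p.2 ω) ∂(pairVol D) := by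
  rw [sq, ← integral_prod_mul]

set_option linter.unusedSectionVars false

section Field

variable {n : ℕ} {Ω : Type*} [MeasurableSpace Ω] {μ : Measure Ω} [IsProbabilityMeasure μ]
  {ξ : EuclideanSpace ℝ (Fin n) → Ω → ℝ}

/-- All pairs `(ξ x, ξ y)` are standard Gaussian pairs with correlation `b ‖x - y‖ ∈ [0, 1]`. -/
structure IsGaussianPairField (μ : Measure Ω) (ξ : EuclideanSpace ℝ (Fin n) → Ω → ℝ)
    (b : ℝ → ℝ) : Prop where
  meas : Measurable (Function.uncurry ξ)
  nonneg : ∀ x y : EuclideanSpace ℝ (Fin n), 0 ≤ b ‖x - y‖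
  le_one : ∀ x y : EuclideanSpace ℝ (Fin n), b ‖x - y‖ ≤ 1
  law : ∀ x y, μ.map (fun ω => (ξ x ω, ξ y ω)) = (stdG.prod stdG).map
    (fun p : ℝ × ℝ => (p.1, b ‖x - y‖ * p.1 + √(1 - b ‖x - y‖ ^ 2) * p.2))

namespace IsGaussianPairField

variable {b : ℝ → ℝ} (h : IsGaussianPairField μ ξ b)
include h

lemma sq_add (x y : EuclideanSpace ℝ (Fin n)) :
    b ‖x - y‖ ^ 2 + √(1 - b ‖x - y‖ ^ 2) ^ 2 = 1 := by
  rw [Real.sq_sqrt]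
  · ring
  · nlinarith [h.nonneg x y, h.le_one x y]

lemma measurable_apply (x : EuclideanSpace ℝ (Fin n)) : Measurable (ξ x) :=
  h.meas.comp measurable_prodMk_left

lemma law_one (x : EuclideanSpace ℝ (Fin n)) : μ.map (ξ x) = stdG := by
  have h1 : ξ x = Prod.fst ∘ (fun ω => (ξ x ω, ξ x ω)) := rfl
  have h2 := h.measurable_apply x
  rw [h1, ← Measure.map_map measurable_fst (by fun_prop), h.law,
    Measure.map_map measurable_fst (by fun_prop)]
  have : (Prod.fst ∘ fun p : ℝ × ℝ =>
      (p.1, b ‖x - x‖ * p.1 + √(1 - b ‖x - x‖ ^ 2) * p.2)) = Prod.fst := rfl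
  rw [this, Measure.map_fst_prod]
  simp

lemma memLp_comp {T : ℝ → ℝ} (hT : MemLp T 2 stdG) (x : EuclideanSpace ℝ (Fin n)) :
    MemLp (fun ω => T (ξ x ω)) 2 μ :=
  hT.comp_measurePreserving ⟨h.measurable_apply x, h.law_one x⟩

lemma integral_comp {f : ℝ → ℝ} (hf : Measurable f) (x : EuclideanSpace ℝ (Fin n)) :
    ∫ ω, f (ξ x ω) ∂μ = ∫ t, f t ∂stdG := by
  rw [← h.law_one x, integral_map (h.measurable_apply x).aemeasurable hf.aestronglyMeasurable]

lemma integral_pair {T : ℝ → ℝ} (hT : Measurable T) (x y : EuclideanSpace ℝ (Fin n)) :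
    ∫ ω, T (ξ x ω) * T (ξ y ω) ∂μ = ∫ p, T p.1 *
      T (b ‖x - y‖ * p.1 + √(1 - b ‖x - y‖ ^ 2) * p.2) ∂(stdG.prod stdG) := by
  have hx := h.measurable_apply x
  have hy := h.measurable_apply y
  have h1 := integral_map (μ := μ) (φ := fun ω => (ξ x ω, ξ y ω))
    (f := fun p : ℝ × ℝ => T p.1 * T p.2) (by fun_prop) (by fun_prop)
  rw [← h1, h.law, integral_map (by fun_prop) (by fun_prop)]

lemma integrable_pair {T : ℝ → ℝ} (hT : Measurable T) (hT2 : MemLp T 2 stdG)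
    {D : Set (EuclideanSpace ℝ (Fin n))} (hD : volume D ≠ ⊤) :
    Integrable (fun q : Ω × (EuclideanSpace ℝ (Fin n) × EuclideanSpace ℝ (Fin n)) =>
      T (ξ q.2.1 q.1) * T (ξ q.2.2 q.1)) (μ.prod (pairVol D)) := by
  have : IsFiniteMeasure (volume.restrict D) := isFiniteMeasure_restrict.2 hD
  have hm : Measurable (fun q : Ω × (EuclideanSpace ℝ (Fin n) × EuclideanSpace ℝ (Fin n)) =>
      T (ξ q.2.1 q.1) * T (ξ q.2.2 q.1)) := by
    have m1 : Measurable (fun q : Ω × (EuclideanSpace ℝ (Fin n) × EuclideanSpace ℝ (Fin n)) =>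
      ξ q.2.1 q.1) := h.meas.comp (by fun_prop :
        Measurable fun q : Ω × (EuclideanSpace ℝ (Fin n) × EuclideanSpace ℝ (Fin n)) =>
          (q.2.1, q.1))
    have m2 : Measurable (fun q : Ω × (EuclideanSpace ℝ (Fin n) × EuclideanSpace ℝ (Fin n)) =>
      ξ q.2.2 q.1) := h.meas.comp (by fun_prop :
        Measurable fun q : Ω × (EuclideanSpace ℝ (Fin n) × EuclideanSpace ℝ (Fin n)) =>
          (q.2.2, q.1))
    exact (hT.comp m1).mul (hT.comp m2)
  rw [integrable_prod_iff' hm.aestronglyMeasurable]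
  have hi : ∀ p : EuclideanSpace ℝ (Fin n) × EuclideanSpace ℝ (Fin n),
      Integrable (fun ω => T (ξ p.1 ω) * T (ξ p.2 ω)) μ := fun p =>
    (h.memLp_comp hT2 p.1).integrable_mul (h.memLp_comp hT2 p.2)
  refine ⟨ae_of_all _ hi, ?_⟩
  refine Integrable.of_bound (C := ∫ t, T t ^ 2 ∂stdG)
    (hm.norm.stronglyMeasurable.integral_prod_left').aestronglyMeasurable (ae_of_all _ fun p => ?_)
  rw [Real.norm_eq_abs, abs_of_nonneg (integral_nonneg fun ω => norm_nonneg _)]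
  have i1 := (h.memLp_comp hT2 p.1).integrable_sq
  have i2 := (h.memLp_comp hT2 p.2).integrable_sq
  calc ∫ ω, ‖T (ξ p.1 ω) * T (ξ p.2 ω)‖ ∂μ
      ≤ ∫ ω, (T (ξ p.1 ω) ^ 2 + T (ξ p.2 ω) ^ 2) / 2 ∂μ := by
        refine integral_mono (hi p).norm ((i1.add i2).div_const 2) fun ω => ?_
        simp only [norm_mul, Real.norm_eq_abs]
        nlinarith [sq_nonneg (|T (ξ p.1 ω)| - |T (ξ p.2 ω)|), sq_abs (T (ξ p.1 ω)),
          sq_abs (T (ξ p.2 ω))]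
    _ = ∫ t, T t ^ 2 ∂stdG := by
        rw [integral_div, integral_add i1 i2, h.integral_comp (hT.pow_const 2) p.1,
          h.integral_comp (hT.pow_const 2) p.2]
        ring

lemma measurable_comp_prod {T : ℝ → ℝ} (hT : Measurable T) :
    Measurable (fun q : Ω × EuclideanSpace ℝ (Fin n) => T (ξ q.2 q.1)) :=
  hT.comp (h.meas.comp measurable_swap)

lemma integrable_comp_prod {T : ℝ → ℝ} (hT : Measurable T) (hT2 : MemLp T 2 stdG)
    {D : Set (EuclideanSpace ℝ (Fin n))} (hD : volume D ≠ ⊤) :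
    Integrable (fun q : Ω × EuclideanSpace ℝ (Fin n) => T (ξ q.2 q.1))
      (μ.prod (volume.restrict D)) := by
  have : IsFiniteMeasure (volume.restrict D) := isFiniteMeasure_restrict.2 hD
  rw [integrable_prod_iff' (h.measurable_comp_prod hT).aestronglyMeasurable]
  refine ⟨ae_of_all _ fun x => (h.memLp_comp hT2 x).integrable one_le_two, ?_⟩
  simp only
  have : ∀ x, ∫ ω, ‖T (ξ x ω)‖ ∂μ = ∫ t, ‖T t‖ ∂stdG := fun x =>
    h.integral_comp hT.norm x
  simp_rw [this]
  exact integrable_const _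

lemma measurable_functional {T : ℝ → ℝ} (hT : Measurable T)
    {D : Set (EuclideanSpace ℝ (Fin n))} (hD : volume D ≠ ⊤) :
    Measurable (fun ω => ∫ x in D, T (ξ x ω)) := by
  have : IsFiniteMeasure (volume.restrict D) := isFiniteMeasure_restrict.2 hD
  exact ((h.measurable_comp_prod hT).stronglyMeasurable.integral_prod_right').measurable

lemma memLp_functional {T : ℝ → ℝ} (hT : Measurable T) (hT2 : MemLp T 2 stdG)
    {D : Set (EuclideanSpace ℝ (Fin n))} (hD : volume D ≠ ⊤) :
    MemLp (fun ω => ∫ x in D, T (ξ x ω)) 2 μ := by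
  rw [memLp_two_iff_integrable_sq (h.measurable_functional hT hD).aestronglyMeasurable]
  simp_rw [sq_functional ξ T D]
  exact (h.integrable_pair hT hT2 hD).integral_prod_left

/-- The second moment of the functional is a double integral of correlations. -/
lemma integral_sq_functional {T : ℝ → ℝ} (hT : Measurable T) (hT2 : MemLp T 2 stdG)
    {D : Set (EuclideanSpace ℝ (Fin n))} (hD : volume D ≠ ⊤) :
    ∫ ω, (∫ x in D, T (ξ x ω)) ^ 2 ∂μ =
      ∫ p, (∫ ω, T (ξ p.1 ω) * T (ξ p.2 ω) ∂μ) ∂(pairVol D) := by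
  have : IsFiniteMeasure (volume.restrict D) := isFiniteMeasure_restrict.2 hD
  simp_rw [sq_functional ξ T D]
  exact integral_integral_swap (h.integrable_pair hT hT2 hD)

lemma integral_functional {T : ℝ → ℝ} (hT : Measurable T) (hT2 : MemLp T 2 stdG)
    (hT0 : ∫ t, T t ∂stdG = 0) {D : Set (EuclideanSpace ℝ (Fin n))} (hD : volume D ≠ ⊤) :
    ∫ ω, (∫ x in D, T (ξ x ω)) ∂μ = 0 := by
  have : IsFiniteMeasure (volume.restrict D) := isFiniteMeasure_restrict.2 hD
  rw [integral_integral_swap (f := fun ω x => T (ξ x ω)) (h.integrable_comp_prod hT hT2 hD)]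
  simp_rw [h.integral_comp hT, hT0]
  simp

lemma variance_functional {T : ℝ → ℝ} (hT : Measurable T) (hT2 : MemLp T 2 stdG)
    (hT0 : ∫ t, T t ∂stdG = 0) {D : Set (EuclideanSpace ℝ (Fin n))} (hD : volume D ≠ ⊤) :
    variance (fun ω => ∫ x in D, T (ξ x ω)) μ = ∫ ω, (∫ x in D, T (ξ x ω)) ^ 2 ∂μ :=
  variance_of_integral_eq_zero (h.measurable_functional hT hD).aemeasurable
    (h.integral_functional hT hT2 hT0 hD)

lemma integral_sq_functional_hermiteR (κ : ℕ)
    {D : Set (EuclideanSpace ℝ (Fin n))} (hD : volume D ≠ ⊤) :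
    ∫ ω, (∫ x in D, (hermiteR κ).eval (ξ x ω)) ^ 2 ∂μ =
      κ.factorial * ∫ p, b ‖p.1 - p.2‖ ^ κ ∂(pairVol D) := by
  have hm : Measurable (fun t : ℝ => (hermiteR κ).eval t) := by fun_prop
  rw [h.integral_sq_functional (T := fun t => (hermiteR κ).eval t) hm (memLp_poly_stdG _) hD,
    ← integral_const_mul]
  refine integral_congr_ae (ae_of_all _ fun p => ?_)
  simp only
  rw [h.integral_pair (T := fun t => (hermiteR κ).eval t) hm,
    integral_pair_hermiteR (h.sq_add _ _)]

lemma integral_sq_functional_le {T : ℝ → ℝ} (hT : Measurable T) (hT2 : MemLp T 2 stdG)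
    {k : ℕ} (hk : ∀ j < k, ∫ x, (hermiteR j).eval x * T x ∂stdG = 0)
    (hbm : Measurable fun z : EuclideanSpace ℝ (Fin n) => b ‖z‖)
    {D : Set (EuclideanSpace ℝ (Fin n))} (hD : volume D ≠ ⊤) :
    ∫ ω, (∫ x in D, T (ξ x ω)) ^ 2 ∂μ ≤
      2 ^ (k + 1) * (∫ x, T x ^ 2 ∂stdG) * ∫ p, b ‖p.1 - p.2‖ ^ k ∂(pairVol D) := by
  have : IsFiniteMeasure (volume.restrict D) := isFiniteMeasure_restrict.2 hD
  rw [h.integral_sq_functional hT hT2 hD, ← integral_const_mul]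
  have hb0 : ∀ z : EuclideanSpace ℝ (Fin n), 0 ≤ b ‖z‖ := fun z => by
    simpa using h.nonneg z 0
  have hb1 : ∀ z : EuclideanSpace ℝ (Fin n), b ‖z‖ ≤ 1 := fun z => by
    simpa using h.le_one z 0
  refine integral_mono (h.integrable_pair hT hT2 hD).integral_prod_right
    ((integrable_pairVol (g := fun z => b ‖z‖ ^ k) (hbm.pow_const k)
      (fun z => pow_nonneg (hb0 z) k) (fun z => pow_le_one₀ (hb0 z) (hb1 z)) hD).const_mul _)
    fun p => ?_
  simp only
  rw [h.integral_pair hT]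
  exact integral_pair_le hT hT2 hk (h.sq_add _ _) (h.nonneg _ _)

end IsGaussianPairField

end Field

/-! ### Equivalence of the normalized limits -/

/-- Two families in `L²` whose difference is negligible in `L²` have, after normalization by
their own `L²` norms, a difference tending to zero in `L²`. -/
lemma tendsto_integral_sq_normalized {Ω : Type*} [MeasurableSpace Ω] {μ : Measure Ω}
    {X Y : ℝ → Ω → ℝ} (hX : ∀ r, MemLp (X r) 2 μ) (hY : ∀ r, MemLp (Y r) 2 μ)
    (hXpos : ∀ᶠ r in atTop, 0 < ∫ ω, X r ω ^ 2 ∂μ)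
    (hYpos : ∀ᶠ r in atTop, 0 < ∫ ω, Y r ω ^ 2 ∂μ)
    (hXY : ∀ ε > 0, ∀ᶠ r in atTop,
      ∫ ω, (X r ω - Y r ω) ^ 2 ∂μ ≤ ε * ∫ ω, Y r ω ^ 2 ∂μ) :
    Tendsto (fun r => ∫ ω, (X r ω / √(∫ ω, X r ω ^ 2 ∂μ) -
      Y r ω / √(∫ ω, Y r ω ^ 2 ∂μ)) ^ 2 ∂μ) atTop (nhds 0) := by
  refine tendsto_order.2 ⟨fun a ha => Eventually.of_forall fun r =>
    ha.trans_le (integral_nonneg fun ω => sq_nonneg _), fun a ha => ?_⟩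
  filter_upwards [hXpos, hYpos, hXY (min (1 / 4) (a / 4)) (by positivity)] with r hx hy hxy
  have iX := (hX r).integrable_sq
  have iY := (hY r).integrable_sq
  have iXY : Integrable (fun ω => X r ω * Y r ω) μ := (hX r).integrable_mul (hY r)
  have iD : Integrable (fun ω => (X r ω - Y r ω) ^ 2) μ := ((hX r).sub (hY r)).integrable_sq
  set A := √(∫ ω, X r ω ^ 2 ∂μ) with hA
  set B := √(∫ ω, Y r ω ^ 2 ∂μ) with hB
  have hApos : 0 < A := Real.sqrt_pos.2 hx
  have hBpos : 0 < B := Real.sqrt_pos.2 hy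
  have hA2 : ∫ ω, X r ω ^ 2 ∂μ = A ^ 2 := (Real.sq_sqrt hx.le).symm
  have hB2 : ∫ ω, Y r ω ^ 2 ∂μ = B ^ 2 := (Real.sq_sqrt hy.le).symm
  set d := ∫ ω, (X r ω - Y r ω) ^ 2 ∂μ with hd
  set P := ∫ ω, X r ω * Y r ω ∂μ with hP
  have e1 : d = A ^ 2 + B ^ 2 - 2 * P := by
    have : ∀ ω, (X r ω - Y r ω) ^ 2 = X r ω ^ 2 + Y r ω ^ 2 - 2 * (X r ω * Y r ω) :=
      fun ω => by ring
    rw [hd]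
    simp_rw [this]
    rw [integral_sub (by exact iX.add iY) (iXY.const_mul 2), integral_add iX iY,
      integral_const_mul, hA2, hB2]
  have e2 : ∫ ω, (X r ω / A - Y r ω / B) ^ 2 ∂μ = 2 - 2 * P / (A * B) := by
    have : ∀ ω, (X r ω / A - Y r ω / B) ^ 2 =
        (1 / A ^ 2) * X r ω ^ 2 + (1 / B ^ 2) * Y r ω ^ 2 - (2 / (A * B)) * (X r ω * Y r ω) :=
      fun ω => by field_simp; ring
    simp_rw [this]
    rw [integral_sub (by exact (iX.const_mul _).add (iY.const_mul _)) (iXY.const_mul _),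
      integral_add (iX.const_mul _) (iY.const_mul _)]
    simp only [integral_const_mul]
    rw [hA2, hB2, ← hP]
    field_simp
    ring
  have e3 : B ^ 2 ≤ 2 * A ^ 2 + 2 * d := by
    rw [← hA2, ← hB2, hd, ← integral_const_mul, ← integral_const_mul,
      ← integral_add (iX.const_mul 2) (iD.const_mul 2)]
    refine integral_mono iY ((iX.const_mul 2).add (iD.const_mul 2)) fun ω => ?_
    simp only
    nlinarith [sq_nonneg (2 * X r ω - Y r ω)]
  rw [hB2] at hxy
  have hd1 : d ≤ 1 / 4 * B ^ 2 := hxy.trans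
    (mul_le_mul_of_nonneg_right (min_le_left _ _) (sq_nonneg _))
  have hd2 : d ≤ a / 4 * B ^ 2 := hxy.trans
    (mul_le_mul_of_nonneg_right (min_le_right _ _) (sq_nonneg _))
  have hAB : B / 2 ≤ A := by
    by_contra! hlt
    nlinarith
  rw [e2]
  -- the integral equals `(d - (A - B)²) / (A B)`, and `A ≥ B / 2`
  have e4 : 2 - 2 * P / (A * B) = (d - (A - B) ^ 2) / (A * B) := by
    rw [e1]; field_simp; ring
  rw [e4, div_lt_iff₀ (by positivity)]
  have h5 : a / 2 * B ^ 2 ≤ a * (A * B) := by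
    have : B * (B / 2) ≤ B * A := mul_le_mul_of_nonneg_left hAB hBpos.le
    nlinarith
  nlinarith [sq_nonneg (A - B), mul_pos ha (pow_pos hBpos 2)]

lemma tendstoInMeasure_of_integral_sq {Ω : Type*} [MeasurableSpace Ω] {μ : Measure Ω}
    {Z : ℝ → Ω → ℝ} (hZ : ∀ r, MemLp (Z r) 2 μ)
    (h : Tendsto (fun r => ∫ ω, Z r ω ^ 2 ∂μ) atTop (nhds 0)) :
    TendstoInMeasure μ Z atTop 0 := by
  refine tendstoInMeasure_of_tendsto_eLpNorm (p := 2) two_ne_zero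
    (fun r => (hZ r).aestronglyMeasurable) aestronglyMeasurable_zero ?_
  have e : ∀ r, eLpNorm (Z r - 0) 2 μ =
      ENNReal.ofReal ((∫ ω, Z r ω ^ 2 ∂μ) ^ ((2 : ℝ)⁻¹)) := by
    intro r
    rw [sub_zero, (hZ r).eLpNorm_eq_integral_rpow_norm two_ne_zero ENNReal.ofNat_ne_top]
    simp
  simp_rw [e]
  have h1 := (h.rpow_const (p := (2 : ℝ)⁻¹) (Or.inr (by norm_num)))
  rw [Real.zero_rpow (by norm_num)] at h1
  simpa using ENNReal.tendsto_ofReal h1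

lemma tendstoInDistribution_iff_forall {Ω : Type*} [MeasurableSpace Ω] {μ : Measure Ω}
    [IsProbabilityMeasure μ] {X : ℝ → Ω → ℝ} (hX : ∀ r, AEMeasurable (X r) μ)
    (μ₀ : Measure ℝ) [IsProbabilityMeasure μ₀] :
    TendstoInDistribution X atTop id (fun _ => μ) μ₀ ↔
      ∀ f : BoundedContinuousFunction ℝ ℝ,
        Tendsto (fun r => ∫ ω, f (X r ω) ∂μ) atTop (nhds (∫ x, f x ∂μ₀)) := by
  have key : ∀ (f : BoundedContinuousFunction ℝ ℝ) (r : ℝ),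
      ∫ x, f x ∂(μ.map (X r)) = ∫ ω, f (X r ω) ∂μ := fun f r =>
    integral_map (hX r) f.continuous.aestronglyMeasurable
  constructor
  · intro h f
    have := (ProbabilityMeasure.tendsto_iff_forall_integral_tendsto.1 h.tendsto) f
    simpa [key] using this
  · intro h
    refine ⟨hX, aemeasurable_id, ?_⟩
    refine ProbabilityMeasure.tendsto_iff_forall_integral_tendsto.2 fun f => ?_
    simpa [key] using h f

lemma forall_tendsto_of_tendstoInMeasure {Ω : Type*} [MeasurableSpace Ω] {μ : Measure Ω}
    [IsProbabilityMeasure μ] {X Y : ℝ → Ω → ℝ} (hX : ∀ r, AEMeasurable (X r) μ)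
    (hY : ∀ r, AEMeasurable (Y r) μ) (hXY : TendstoInMeasure μ (Y - X) atTop 0)
    (μ₀ : Measure ℝ) [IsProbabilityMeasure μ₀]
    (h : ∀ f : BoundedContinuousFunction ℝ ℝ,
      Tendsto (fun r => ∫ ω, f (X r ω) ∂μ) atTop (nhds (∫ x, f x ∂μ₀))) :
    ∀ f : BoundedContinuousFunction ℝ ℝ,
      Tendsto (fun r => ∫ ω, f (Y r ω) ∂μ) atTop (nhds (∫ x, f x ∂μ₀)) := by
  rw [← tendstoInDistribution_iff_forall hX] at h
  rw [← tendstoInDistribution_iff_forall hY]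
  exact tendstoInDistribution_of_tendstoInMeasure_sub Y id h hXY hY

/-! ### Consequences of the Gaussian law of the field -/

section Law

variable {n : ℕ} {Ω : Type*} [MeasurableSpace Ω] {μ : Measure Ω}
  {ξ : EuclideanSpace ℝ (Fin n) → Ω → ℝ} {B : ℝ → ℝ}

lemma integral_sq_comb (hξ : Measurable (Function.uncurry ξ))
    (hlaw : ∀ x y a b, μ.map (fun ω => a * ξ x ω + b * ξ y ω) =
      gaussianReal 0 (Real.toNNReal (a ^ 2 + 2 * a * b * B ‖x - y‖ + b ^ 2)))
    (x y : EuclideanSpace ℝ (Fin n)) (a b : ℝ) :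
    ∫ ω, (a * ξ x ω + b * ξ y ω) ^ 2 ∂μ =
      max (a ^ 2 + 2 * a * b * B ‖x - y‖ + b ^ 2) 0 := by
  have hx : ∀ x, Measurable (ξ x) := fun x => hξ.comp measurable_prodMk_left
  have hm : Measurable (fun ω => a * ξ x ω + b * ξ y ω) :=
    ((hx x).const_mul a).add ((hx y).const_mul b)
  have h1 := integral_map (μ := μ) hm.aemeasurable (f := fun t : ℝ => t ^ 2)
    (by fun_prop)
  rw [← h1, hlaw]
  have h2 := variance_of_integral_eq_zero (X := fun t : ℝ => t)
    (μ := gaussianReal 0 (Real.toNNReal (a ^ 2 + 2 * a * b * B ‖x - y‖ + b ^ 2)))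
    (by fun_prop) (by simp)
  rw [← h2, variance_fun_id_gaussianReal, Real.coe_toNNReal']

/-- The covariance is bounded by the variance: compare `E (ξ x - ξ y)² ≥ 0` with the
parallelogram identity. -/
lemma cov_le_one (hξ : Measurable (Function.uncurry ξ))
    (hlaw : ∀ x y a b, μ.map (fun ω => a * ξ x ω + b * ξ y ω) =
      gaussianReal 0 (Real.toNNReal (a ^ 2 + 2 * a * b * B ‖x - y‖ + b ^ 2)))
    (x y : EuclideanSpace ℝ (Fin n)) : B ‖x - y‖ ≤ 1 := by
  have hx : ∀ x, Measurable (ξ x) := fun x => hξ.comp measurable_prodMk_left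
  have key := integral_sq_comb hξ hlaw
  have hsq : ∀ x, ∫ ω, ξ x ω ^ 2 ∂μ = 1 := fun x => by
    have := key x x 1 0
    simpa using this
  have hi : ∀ x, Integrable (fun ω => ξ x ω ^ 2) μ := fun x =>
    Integrable.of_integral_ne_zero (by rw [hsq]; exact one_ne_zero)
  have hL : ∀ x, MemLp (ξ x) 2 μ := fun x =>
    (memLp_two_iff_integrable_sq (hx x).aestronglyMeasurable).2 (hi x)
  have i1 : Integrable (fun ω => (1 * ξ x ω + 1 * ξ y ω) ^ 2) μ :=
    (((hL x).const_mul 1).add ((hL y).const_mul 1)).integrable_sq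
  have i2 : Integrable (fun ω => (1 * ξ x ω + (-1) * ξ y ω) ^ 2) μ :=
    (((hL x).const_mul 1).add ((hL y).const_mul (-1))).integrable_sq
  have e : ∫ ω, (1 * ξ x ω + 1 * ξ y ω) ^ 2 ∂μ + ∫ ω, (1 * ξ x ω + (-1) * ξ y ω) ^ 2 ∂μ =
      4 := by
    rw [← integral_add i1 i2]
    have : ∀ ω, (1 * ξ x ω + 1 * ξ y ω) ^ 2 + (1 * ξ x ω + (-1) * ξ y ω) ^ 2 =
        2 * ξ x ω ^ 2 + 2 * ξ y ω ^ 2 := fun ω => by ring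
    simp_rw [this]
    rw [integral_add ((hi x).const_mul 2) ((hi y).const_mul 2), integral_const_mul,
      integral_const_mul, hsq, hsq]
    norm_num
  rw [key, key] at e
  by_contra! hlt
  have := le_max_left ((1 : ℝ) ^ 2 + 2 * 1 * 1 * B ‖x - y‖ + 1 ^ 2) 0
  have := le_max_right ((1 : ℝ) ^ 2 + 2 * 1 * (-1) * B ‖x - y‖ + (-1) ^ 2) 0
  linarith

/-- The covariance is recovered measurably as a second moment of the jointly measurable field. -/
lemma measurable_cov [SFinite μ] (hξ : Measurable (Function.uncurry ξ))
    (hlaw : ∀ x y a b, μ.map (fun ω => a * ξ x ω + b * ξ y ω) =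
      gaussianReal 0 (Real.toNNReal (a ^ 2 + 2 * a * b * B ‖x - y‖ + b ^ 2)))
    (hpos : ∀ z : EuclideanSpace ℝ (Fin n), 0 ≤ B ‖z‖) :
    Measurable fun z : EuclideanSpace ℝ (Fin n) => B ‖z‖ := by
  have e : (fun z : EuclideanSpace ℝ (Fin n) => B ‖z‖) =
      fun z => (∫ ω, (1 * ξ z ω + 1 * ξ 0 ω) ^ 2 ∂μ - 2) / 2 := by
    funext z
    rw [integral_sq_comb hξ hlaw, sub_zero, max_eq_left (by nlinarith [hpos z])]
    ring
  rw [e]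
  have m0 : Measurable (fun q : EuclideanSpace ℝ (Fin n) × Ω => ξ 0 q.2) :=
    hξ.comp (by fun_prop : Measurable fun q : EuclideanSpace ℝ (Fin n) × Ω =>
      ((0 : EuclideanSpace ℝ (Fin n)), q.2))
  have m1 : Measurable (fun q : EuclideanSpace ℝ (Fin n) × Ω => ξ q.1 q.2) := hξ
  have m : Measurable (fun q : EuclideanSpace ℝ (Fin n) × Ω =>
      (1 * ξ q.1 q.2 + 1 * ξ 0 q.2) ^ 2) := by fun_prop
  exact (m.stronglyMeasurable.integral_prod_right'.measurable.sub_const 2).div_const 2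

lemma isGaussianPairField_of_law [IsProbabilityMeasure μ] (hξ : Measurable (Function.uncurry ξ))
    (hlaw : ∀ x y a b, μ.map (fun ω => a * ξ x ω + b * ξ y ω) =
      gaussianReal 0 (Real.toNNReal (a ^ 2 + 2 * a * b * B ‖x - y‖ + b ^ 2)))
    (hpos : ∀ z : EuclideanSpace ℝ (Fin n), 0 ≤ B ‖z‖) : IsGaussianPairField μ ξ B where
  meas := hξ
  nonneg x y := hpos _
  le_one x y := cov_le_one hξ hlaw x y
  law x y := by
    have hx : ∀ x, Measurable (ξ x) := fun x => hξ.comp measurable_prodMk_left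
    refine map_pair_eq (hx x) (hx y) ?_ (hlaw x y)
    rw [Real.sq_sqrt]
    · ring
    · nlinarith [hpos (x - y), cov_le_one hξ hlaw x y]

end Law

/-! ### The reduction -/

/-- If `S` is orthogonal to `H_j` for `j < κ` and `E S H_κ = c κ!` with `c ≠ 0`, the functional of
`S` minus `c` times the functional of `H_κ` is negligible in `L²` against the latter. -/
lemma IsGaussianPairField.eventually_integral_sq_sub_le {n : ℕ} {Ω : Type*} [MeasurableSpace Ω]
    {μ : Measure Ω} [IsProbabilityMeasure μ] {ξ : EuclideanSpace ℝ (Fin n) → Ω → ℝ} {b : ℝ → ℝ}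
    (h : IsGaussianPairField μ ξ b)
    (hbm : Measurable fun z : EuclideanSpace ℝ (Fin n) => b ‖z‖) {κ : ℕ}
    {Δ : Set (EuclideanSpace ℝ (Fin n))} (hΔ : ∀ r : ℝ, volume (r • Δ) ≠ ⊤)
    (hsmall : ∀ ε > 0, ∀ᶠ r : ℝ in atTop,
      ∫ p, b ‖p.1 - p.2‖ ^ (κ + 1) ∂(pairVol (r • Δ)) ≤
        ε * ∫ p, b ‖p.1 - p.2‖ ^ κ ∂(pairVol (r • Δ)))
    {S : ℝ → ℝ} (hS : Measurable S) (hS2 : MemLp S 2 stdG)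
    (hrank : ∀ j < κ, ∫ x, (hermiteR j).eval x * S x ∂stdG = 0)
    {c : ℝ} (hc : c ≠ 0) (hSc : ∫ x, (hermiteR κ).eval x * S x ∂stdG = c * κ.factorial)
    {ε : ℝ} (hε : 0 < ε) :
    ∀ᶠ r : ℝ in atTop,
      ∫ ω, ((∫ x in r • Δ, S (ξ x ω)) - c * ∫ x in r • Δ, (hermiteR κ).eval (ξ x ω)) ^ 2 ∂μ ≤
        ε * ∫ ω, (c * ∫ x in r • Δ, (hermiteR κ).eval (ξ x ω)) ^ 2 ∂μ := by
  have hHm : Measurable (fun t : ℝ => (hermiteR κ).eval t) := by fun_prop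
  set T : ℝ → ℝ := fun t => S t - c * (hermiteR κ).eval t with hT
  have hTm : Measurable T := hS.sub (hHm.const_mul c)
  have hT2 : MemLp T 2 stdG := hS2.sub ((memLp_poly_stdG _).const_mul c)
  have hTorth : ∀ j < κ + 1, ∫ x, (hermiteR j).eval x * T x ∂stdG = 0 := by
    intro j hj
    have e : ∀ x, (hermiteR j).eval x * T x = (hermiteR j).eval x * S x -
        c * ((hermiteR j).eval x * (hermiteR κ).eval x) := fun x => by rw [hT]; ring
    simp_rw [e]
    have i1 : Integrable (fun x => (hermiteR j).eval x * S x) stdG :=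
      (memLp_poly_stdG _).integrable_mul hS2
    have i2 : Integrable (fun x => (hermiteR j).eval x * (hermiteR κ).eval x) stdG :=
      (memLp_poly_stdG _).integrable_mul (memLp_poly_stdG _)
    rw [integral_sub i1 (i2.const_mul c),
      integral_const_mul, integral_hermiteR_mul_hermiteR]
    rcases eq_or_ne j κ with rfl | hne
    · simp [hSc]
    · simp [hrank j (by omega), hne]
  set M : ℝ := 2 ^ (κ + 1 + 1) * ∫ x, T x ^ 2 ∂stdG with hM
  have hM0 : 0 ≤ M := mul_nonneg (by positivity) (integral_nonneg fun x => sq_nonneg _)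
  have hf : (0 : ℝ) < κ.factorial := by exact_mod_cast κ.factorial_pos
  have hη : 0 < ε * (c ^ 2 * κ.factorial) / (M + 1) := by positivity
  filter_upwards [hsmall _ hη] with r hr
  set D := r • Δ with hD
  have hDt := hΔ r
  -- almost surely both integrands are integrable over `D`, so the integral of `T` splits
  have e1 : ∀ᵐ ω ∂μ, (∫ x in D, S (ξ x ω)) - c * ∫ x in D, (hermiteR κ).eval (ξ x ω) =
      ∫ x in D, T (ξ x ω) := by
    have : IsFiniteMeasure (volume.restrict D) := isFiniteMeasure_restrict.2 hDt
    filter_upwards [(h.integrable_comp_prod hS hS2 hDt).prod_right_ae,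
      (h.integrable_comp_prod (T := fun t => (hermiteR κ).eval t) hHm
        (memLp_poly_stdG _) hDt).prod_right_ae] with ω h1 h2
    rw [← integral_const_mul, ← integral_sub h1 (h2.const_mul c)]
  have e2 : ∫ ω, ((∫ x in D, S (ξ x ω)) - c * ∫ x in D, (hermiteR κ).eval (ξ x ω)) ^ 2 ∂μ =
      ∫ ω, (∫ x in D, T (ξ x ω)) ^ 2 ∂μ :=
    integral_congr_ae (e1.mono fun ω hω => by simp only [hω])
  have e3 : ∫ ω, (c * ∫ x in D, (hermiteR κ).eval (ξ x ω)) ^ 2 ∂μ =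
      c ^ 2 * (κ.factorial * ∫ p, b ‖p.1 - p.2‖ ^ κ ∂(pairVol D)) := by
    simp_rw [mul_pow]
    rw [integral_const_mul, h.integral_sq_functional_hermiteR κ hDt]
  rw [e2, e3]
  set I := ∫ p, b ‖p.1 - p.2‖ ^ κ ∂(pairVol D)
  have hI : 0 ≤ I := integral_nonneg fun p => pow_nonneg (h.nonneg _ _) _
  calc ∫ ω, (∫ x in D, T (ξ x ω)) ^ 2 ∂μ
      ≤ M * ∫ p, b ‖p.1 - p.2‖ ^ (κ + 1) ∂(pairVol D) :=
        h.integral_sq_functional_le hTm hT2 hTorth hbm hDt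
    _ ≤ M * (ε * (c ^ 2 * κ.factorial) / (M + 1) * I) := mul_le_mul_of_nonneg_left hr hM0
    _ = M / (M + 1) * (ε * (c ^ 2 * (κ.factorial * I))) := by ring
    _ ≤ 1 * (ε * (c ^ 2 * (κ.factorial * I))) := by
        refine mul_le_mul_of_nonneg_right ?_ (by positivity)
        rw [div_le_one (by positivity)]
        linarith
    _ = ε * (c ^ 2 * (κ.factorial * I)) := one_mul _

lemma gaussianPDFReal_eq_stdNormalPDF (x : ℝ) : gaussianPDFReal 0 1 x = stdNormalPDF x := by
  simp only [gaussianPDFReal, stdNormalPDF, NNReal.coe_one, sub_zero, mul_one]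
  ring

lemma integral_mul_hermiteFun (S : ℝ → ℝ) (j : ℕ) :
    ∫ x : ℝ, S x * hermiteFun j x * stdNormalPDF x =
      ∫ x, (hermiteR j).eval x * S x ∂stdG := by
  rw [integral_stdG]
  refine integral_congr_ae (ae_of_all _ fun x => ?_)
  simp only [gaussianPDFReal_eq_stdNormalPDF, hermiteFun_eq]
  ring

lemma memLp_stdG_of_integrable {S : ℝ → ℝ} (hS : Measurable S)
    (h : Integrable (fun x => S x ^ 2 * stdNormalPDF x) volume) : MemLp S 2 stdG := by
  rw [memLp_two_iff_integrable_sq hS.aestronglyMeasurable, integrable_stdG_iff]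
  refine h.congr (ae_of_all _ fun x => ?_)
  simp only [gaussianPDFReal_eq_stdNormalPDF]
  ring

/-- Covariances `r ^ (-α) L₀(r)` with `L₀` slowly varying have dyadic ratio `2 ^ (-α)`. -/
lemma tendsto_ratio_two {α : ℝ} {B L₀ : ℝ → ℝ}
    (hL₀slow : ∀ t > (0 : ℝ), Tendsto (fun r => L₀ (t * r) / L₀ r) atTop (nhds 1))
    (hBform : ∀ r > (0 : ℝ), B r = r ^ (-α) * L₀ r) :
    Tendsto (fun r => B (2 * r) / B r) atTop (nhds (2 ^ (-α))) := by
  have h := (hL₀slow 2 two_pos).const_mul ((2 : ℝ) ^ (-α))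
  rw [mul_one] at h
  refine h.congr' ?_
  filter_upwards [eventually_gt_atTop 0] with r hr
  rw [hBform r hr, hBform (2 * r) (by positivity), Real.mul_rpow zero_le_two hr.le]
  have : r ^ (-α) ≠ 0 := (Real.rpow_pos_of_pos hr _).ne'
  field_simp

theorem stmt_12 (n κ : ℕ) (hn : 1 ≤ n) (hκ : 1 ≤ κ)
    (α : ℝ) (hα0 : 0 < α) (hακ : α < (n : ℝ) / κ)
    {Ω : Type*} [MeasurableSpace Ω] (μ : Measure Ω) [IsProbabilityMeasure μ]
    (ξ : EuclideanSpace ℝ (Fin n) → Ω → ℝ)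
    (hξmeas : Measurable (Function.uncurry ξ))
    (hξmsc : ∀ x₀ : EuclideanSpace ℝ (Fin n),
      Tendsto (fun x => ∫ ω, (ξ x ω - ξ x₀ ω) ^ 2 ∂μ) (nhds x₀) (nhds 0))
    (B : ℝ → ℝ) (hB0 : B 0 = 1)
    (L₀ : ℝ → ℝ) (hL₀pos : ∀ r > (0 : ℝ), 0 < L₀ r)
    (hL₀slow : ∀ t > (0 : ℝ), Tendsto (fun r => L₀ (t * r) / L₀ r) atTop (nhds 1))
    (hBform : ∀ r > (0 : ℝ), B r = r ^ (-α) * L₀ r)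
    (hgauss : ∀ (m : ℕ) (x : Fin m → EuclideanSpace ℝ (Fin n)) (c : Fin m → ℝ),
      Measure.map (fun ω => ∑ i, c i * ξ (x i) ω) μ =
        gaussianReal 0
          (Real.toNNReal (∑ i, ∑ j, c i * c j * B ‖x i - x j‖)))
    (Δ : Set (EuclideanSpace ℝ (Fin n))) (hΔcomp : IsCompact Δ)
    (hΔpos : 0 < volume Δ) (hΔ0 : (0 : EuclideanSpace ℝ (Fin n)) ∈ interior Δ)
    (S : ℝ → ℝ) (hSmeas : Measurable S)
    (hSL2 : Integrable (fun x => S x ^ 2 * stdNormalPDF x) volume)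
    (hrank : ∀ j < κ, ∫ x : ℝ, S x * hermiteFun j x * stdNormalPDF x = 0)
    (hCκ : (∫ x : ℝ, S x * hermiteFun κ x * stdNormalPDF x) ≠ 0)
    (hvarS : ∃ r₀ : ℝ, ∀ r ≥ r₀,
      0 < variance (fun ω => ∫ x in r • Δ, S (ξ x ω)) μ)
    (hvarH : ∃ r₀ : ℝ, ∀ r ≥ r₀,
      0 < variance (fun ω =>
        ((∫ x : ℝ, S x * hermiteFun κ x * stdNormalPDF x) / (Nat.factorial κ)) *
          ∫ x in r • Δ, hermiteFun κ (ξ x ω)) μ)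
    (μ₀ : Measure ℝ) (hμ₀ : IsProbabilityMeasure μ₀) :
    (∀ f : BoundedContinuousFunction ℝ ℝ,
      Tendsto
        (fun r : ℝ => ∫ ω, f ((∫ x in r • Δ, S (ξ x ω)) /
          Real.sqrt (variance (fun ω' => ∫ x in r • Δ, S (ξ x ω')) μ)) ∂μ)
        atTop (nhds (∫ x, f x ∂μ₀))) ↔
    (∀ f : BoundedContinuousFunction ℝ ℝ,
      Tendsto
        (fun r : ℝ => ∫ ω, f
          ((((∫ x : ℝ, S x * hermiteFun κ x * stdNormalPDF x) / (Nat.factorial κ)) *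
              ∫ x in r • Δ, hermiteFun κ (ξ x ω)) /
            Real.sqrt (variance (fun ω' =>
              ((∫ x : ℝ, S x * hermiteFun κ x * stdNormalPDF x) / (Nat.factorial κ)) *
                ∫ x in r • Δ, hermiteFun κ (ξ x ω')) μ)) ∂μ)
        atTop (nhds (∫ x, f x ∂μ₀))) := by
  have hlaw : ∀ x y a b, μ.map (fun ω => a * ξ x ω + b * ξ y ω) =
      gaussianReal 0 (Real.toNNReal (a ^ 2 + 2 * a * b * B ‖x - y‖ + b ^ 2)) := by
    intro x y a b
    have h := hgauss 2 ![x, y] ![a, b]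
    simp only [Fin.sum_univ_two, Matrix.cons_val_zero, Matrix.cons_val_one, sub_self,
      norm_zero, hB0, norm_sub_rev y x] at h
    rw [h]
    congr 2
    ring
  have hBpos : ∀ r > (0 : ℝ), 0 < B r := fun r hr => by
    rw [hBform r hr]
    exact mul_pos (Real.rpow_pos_of_pos hr _) (hL₀pos r hr)
  have hBnn : ∀ z : EuclideanSpace ℝ (Fin n), 0 ≤ B ‖z‖ := fun z => by
    rcases (norm_nonneg z).eq_or_lt with h0 | h0
    · rw [← h0, hB0]; exact zero_le_one
    · exact (hBpos _ h0).le
  have hBle : ∀ r > (0 : ℝ), B r ≤ 1 := fun r hr => by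
    have : Nonempty (Fin n) := ⟨⟨0, hn⟩⟩
    obtain ⟨x, hx⟩ := exists_norm_eq (EuclideanSpace ℝ (Fin n)) hr.le
    have := cov_le_one hξmeas hlaw x 0
    rwa [sub_zero, hx] at this
  have hbm := measurable_cov hξmeas hlaw hBnn
  have hF := isGaussianPairField_of_law hξmeas hlaw hBnn
  have hκ0 : (0 : ℝ) < κ := by exact_mod_cast hκ
  have hq1 : (2 : ℝ) ^ (-α) < 1 := Real.rpow_lt_one_of_one_lt_of_neg one_lt_two (by linarith)
  have hqk : (1 : ℝ) < 2 ^ n * ((2 : ℝ) ^ (-α)) ^ κ := by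
    rw [← Real.rpow_natCast, ← Real.rpow_natCast, ← Real.rpow_mul zero_le_two,
      ← Real.rpow_add two_pos]
    refine Real.one_lt_rpow one_lt_two ?_
    rw [lt_div_iff₀ hκ0] at hακ
    linarith
  have hΔtop : ∀ r : ℝ, volume (r • Δ) ≠ ⊤ := fun r => (hΔcomp.smul r).measure_lt_top.ne
  have hS2 : MemLp S 2 stdG := memLp_stdG_of_integrable hSmeas hSL2
  simp_rw [integral_mul_hermiteFun] at hrank hCκ hvarH ⊢
  simp only [hermiteFun_eq] at hvarH ⊢
  set c : ℝ := (∫ x, (hermiteR κ).eval x * S x ∂stdG) / κ.factorial with hc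
  have hf : (κ.factorial : ℝ) ≠ 0 := by exact_mod_cast κ.factorial_ne_zero
  have hc0 : c ≠ 0 := div_ne_zero hCκ hf
  have hSc : ∫ x, (hermiteR κ).eval x * S x ∂stdG = c * κ.factorial := by
    rw [hc, div_mul_cancel₀ _ hf]
  set H : ℝ → ℝ := fun t => (hermiteR κ).eval t with hH
  have hHm : Measurable H := by fun_prop
  have hH2 : MemLp H 2 stdG := memLp_poly_stdG _
  -- both integrands are centred because `H_0 = 1` and `κ ≥ 1`
  have hS0 : ∫ t, S t ∂stdG = 0 := by
    have := hrank 0 (by omega)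
    simpa [hermiteR_zero] using this
  have hH0 : ∫ t, H t ∂stdG = 0 := by
    have := integral_hermiteR_mul_hermiteR 0 κ
    rw [if_neg (by omega)] at this
    simpa [hermiteR_zero] using this
  set X : ℝ → Ω → ℝ := fun r ω => ∫ x in r • Δ, S (ξ x ω) with hX
  set Y : ℝ → Ω → ℝ := fun r ω => c * ∫ x in r • Δ, H (ξ x ω) with hY
  have hXL : ∀ r, MemLp (X r) 2 μ := fun r => hF.memLp_functional hSmeas hS2 (hΔtop r)
  have hYL : ∀ r, MemLp (Y r) 2 μ := fun r =>
    (hF.memLp_functional hHm hH2 (hΔtop r)).const_mul c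
  have hvX : ∀ r, variance (X r) μ = ∫ ω, X r ω ^ 2 ∂μ := fun r =>
    hF.variance_functional hSmeas hS2 hS0 (hΔtop r)
  have hvY : ∀ r, variance (Y r) μ = ∫ ω, Y r ω ^ 2 ∂μ := fun r => by
    rw [hY]
    simp only
    rw [variance_const_mul, hF.variance_functional hHm hH2 hH0 (hΔtop r), ← integral_const_mul]
    simp_rw [mul_pow]
  have hsmall : ∀ ε > 0, ∀ᶠ r : ℝ in atTop,
      ∫ p, B ‖p.1 - p.2‖ ^ (κ + 1) ∂(pairVol (r • Δ)) ≤
        ε * ∫ p, B ‖p.1 - p.2‖ ^ κ ∂(pairVol (r • Δ)) := fun ε hε =>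
    integral_pairVol_succ_le hn hq1 hqk hB0 hBpos hBle hbm (tendsto_ratio_two hL₀slow hBform)
      hΔcomp hΔ0 hε
  have hXpos : ∀ᶠ r in atTop, 0 < ∫ ω, X r ω ^ 2 ∂μ := by
    obtain ⟨r₀, h₀⟩ := hvarS
    filter_upwards [eventually_ge_atTop r₀] with r hr
    rw [← hvX]
    exact h₀ r hr
  have hYpos : ∀ᶠ r in atTop, 0 < ∫ ω, Y r ω ^ 2 ∂μ := by
    obtain ⟨r₀, h₀⟩ := hvarH
    filter_upwards [eventually_ge_atTop r₀] with r hr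
    rw [← hvY]
    exact h₀ r hr
  have hlim := tendsto_integral_sq_normalized hXL hYL hXpos hYpos fun ε hε =>
    hF.eventually_integral_sq_sub_le hbm hΔtop hsmall hSmeas hS2 hrank hc0 hSc hε
  simp_rw [← hvX, ← hvY] at hlim
  have hX'L : ∀ r, MemLp (fun ω => X r ω / √(variance (X r) μ)) 2 μ := fun r => by
    simpa only [div_eq_mul_inv] using (hXL r).mul_const _
  have hY'L : ∀ r, MemLp (fun ω => Y r ω / √(variance (Y r) μ)) 2 μ := fun r => by
    simpa only [div_eq_mul_inv] using (hYL r).mul_const _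
  have hXY := tendstoInMeasure_of_integral_sq (fun r => (hX'L r).sub (hY'L r)) hlim
  have hYX := tendstoInMeasure_of_integral_sq (fun r => (hY'L r).sub (hX'L r))
    (hlim.congr fun r => integral_congr_ae (ae_of_all _ fun ω => by
      simp only [Pi.sub_apply]; ring))
  exact ⟨forall_tendsto_of_tendstoInMeasure (fun r => (hX'L r).aemeasurable)
      (fun r => (hY'L r).aemeasurable) hYX μ₀,
    forall_tendsto_of_tendstoInMeasure (fun r => (hY'L r).aemeasurable)
      (fun r => (hX'L r).aemeasurable) hXY μ₀⟩
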